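/- arXiv:1411.3517 — 3 statements merged into one kernel-verified Lean document; each statement's English description precedes it below -/
import Mathlib

section
/- There is a universal constant C > 0 such that for all R, t ∈ ℕ and every function A : F₃^R → ℂ with Â(α) = 0 for all α ∈ F₃^R with |α| > t, one has ‖A‖₄ ≤ C^t·‖A‖₂. -/
open scoped BigOperators

abbrev F3 := ZMod 3

noncomputable def ω : ℂ := Complex.exp (2 * (Real.pi : ℂ) * Complex.I / 3)

/-- The character `χ_α(f) = ω^{Σ_i α_i f_i}` on `F₃^R`. -/
noncomputable def chiV {R : ℕ} (α f : Fin R → F3) : ℂ := ω ^ (∑ i, α i * f i).val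

/-- Support size `|α|`. -/
def suppV {R : ℕ} (α : Fin R → F3) : ℕ := (Finset.univ.filter fun i => α i ≠ 0).card

/-- Fourier coefficient `Â(α) = E_f[A(f)·conj(χ_α(f))]`. -/
noncomputable def fourierV {R : ℕ} (A : (Fin R → F3) → ℂ) (α : Fin R → F3) : ℂ :=
  (∑ f, A f * (starRingEnd ℂ) (chiV α f)) / (3 : ℂ) ^ R

/-- Expectation over the uniform distribution on `F₃^R`. -/
noncomputable def expV {R : ℕ} (A : (Fin R → F3) → ℝ) : ℝ := (∑ f, A f) / 3 ^ R

/-- Degree-`k` influence `Inf_x^{≤k}(A)`. -/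
noncomputable def infV {R : ℕ} (k : ℕ) (A : (Fin R → F3) → ℝ) (x : Fin R) : ℝ :=
  ∑ α ∈ Finset.univ.filter (fun α : Fin R → F3 => α x ≠ 0 ∧ suppV α ≤ k),
    ‖fourierV (fun f => (A f : ℂ)) α‖ ^ 2

/-- `L^q` norm `(E_f |A(f)|^q)^{1/q}` of a function on `F₃^R`. -/
noncomputable def normqV {R : ℕ} (q : ℝ) (A : (Fin R → F3) → ℂ) : ℝ :=
  ((∑ f, ‖A f‖ ^ q) / 3 ^ R) ^ (1 / q)

/-!
The argument works over any finite alphabet `X`, with "degree" read as the number of coordinates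
that the terms of a function depend on, and goes by induction on the number of coordinates.
Averaging `A` over its first coordinate gives `B` of degree at most `t`, while each deviation
`D x = A (x, ·) - B` has degree at most `t - 1`, since the terms not involving the first coordinate
cancel. As the `D x` sum to zero, the terms of `𝔼 ‖B + D‖ ^ 4` linear in `D` vanish, and
Cauchy–Schwarz bounds the mixed terms `‖B‖ ^ 2 * ‖D‖ ^ 2`; the factor `C ^ 4` that `D` gains from
its lower degree absorbs all constants. Over `F₃`, Fourier inversion turns the vanishing of the
coefficients above level `t` into degree at most `t`.
-/

section Moments

open Finset

variable {κ Ω E : Type*} [Fintype κ] [Fintype Ω] [NormedAddCommGroup E]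

lemma expect_sq_le_card_mul_sq_expect {u : κ → ℝ} (hu : ∀ x, 0 ≤ u x) :
    𝔼 x, u x ^ 2 ≤ Fintype.card κ * (𝔼 x, u x) ^ 2 := by
  rcases isEmpty_or_nonempty κ with _ | _
  · simp
  simp only [Fintype.expect_eq_sum_div_card]
  calc (∑ x, u x ^ 2) / Fintype.card κ
      ≤ (∑ x, u x) ^ 2 / Fintype.card κ := by
        gcongr
        exact sum_sq_le_sq_sum_of_nonneg fun x _ ↦ hu x
    _ = Fintype.card κ * ((∑ x, u x) / Fintype.card κ) ^ 2 := by field_simp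

lemma expect_norm_sq_mul_norm_sq_le {B D : Ω → E} {C k : ℝ} (hk : 0 ≤ k)
    (hB : 𝔼 f, ‖B f‖ ^ 4 ≤ C ^ 4 * k * (𝔼 f, ‖B f‖ ^ 2) ^ 2)
    (hD : 𝔼 f, ‖D f‖ ^ 4 ≤ k * (𝔼 f, ‖D f‖ ^ 2) ^ 2) :
    𝔼 f, ‖B f‖ ^ 2 * ‖D f‖ ^ 2 ≤ C ^ 2 * k * ((𝔼 f, ‖B f‖ ^ 2) * 𝔼 f, ‖D f‖ ^ 2) := by
  refine le_of_sq_le_sq ?_ (by positivity)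
  calc (𝔼 f, ‖B f‖ ^ 2 * ‖D f‖ ^ 2) ^ 2
      ≤ (𝔼 f, (‖B f‖ ^ 2) ^ 2) * 𝔼 f, (‖D f‖ ^ 2) ^ 2 := expect_mul_sq_le_sq_mul_sq _ _ _
    _ = (𝔼 f, ‖B f‖ ^ 4) * 𝔼 f, ‖D f‖ ^ 4 := by simp only [← pow_mul]
    _ ≤ (C ^ 4 * k * (𝔼 f, ‖B f‖ ^ 2) ^ 2) * (k * (𝔼 f, ‖D f‖ ^ 2) ^ 2) := by gcongr
    _ = (C ^ 2 * k * ((𝔼 f, ‖B f‖ ^ 2) * 𝔼 f, ‖D f‖ ^ 2)) ^ 2 := by ring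

lemma expect_norm_pow_four_eq_of_forall_eq [Nonempty Ω] {A : Ω → E}
    (hA : ∀ f g, A f = A g) : 𝔼 f, ‖A f‖ ^ 4 = (𝔼 f, ‖A f‖ ^ 2) ^ 2 := by
  obtain ⟨g⟩ := ‹Nonempty Ω›
  simp only [fun f ↦ hA f g]
  rw [expect_const ⟨g, mem_univ g⟩, expect_const ⟨g, mem_univ g⟩, ← pow_mul]

variable [InnerProductSpace ℝ E]

lemma norm_add_pow_four_le (b d : E) :
    ‖b + d‖ ^ 4 ≤ ‖b‖ ^ 4 + 8 * (‖b‖ ^ 2 * ‖d‖ ^ 2) + 3 * ‖d‖ ^ 4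
      + 4 * ‖b‖ ^ 2 * inner ℝ b d := by
  have cauchy_schwarz : inner ℝ b d ^ 2 ≤ ‖b‖ ^ 2 * ‖d‖ ^ 2 := by
    rw [← mul_pow, ← sq_abs]
    gcongr
    exact abs_real_inner_le_norm b d
  have am_gm : 2 * inner ℝ b d * ‖d‖ ^ 2 ≤ inner ℝ b d ^ 2 + (‖d‖ ^ 2) ^ 2 :=
    two_mul_le_add_sq _ _
  calc ‖b + d‖ ^ 4 = (‖b + d‖ ^ 2) ^ 2 := by ring
    _ = (‖b‖ ^ 2 + 2 * inner ℝ b d + ‖d‖ ^ 2) ^ 2 := by rw [norm_add_sq_real]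
    _ ≤ _ := by linear_combination 6 * cauchy_schwarz + 2 * am_gm

lemma expect_inner_eq_zero {d : κ → E} (hd : ∑ x, d x = 0) (b : E) :
    𝔼 x, inner ℝ b (d x) = 0 := by
  rw [Fintype.expect_eq_sum_div_card, ← inner_sum, hd, inner_zero_right, zero_div]

lemma expect_norm_add_sq [Nonempty κ] {d : κ → E} (hd : ∑ x, d x = 0) (b : E) :
    𝔼 x, ‖b + d x‖ ^ 2 = ‖b‖ ^ 2 + 𝔼 x, ‖d x‖ ^ 2 := by
  simp only [norm_add_sq_real, expect_add_distrib, ← mul_expect, expect_inner_eq_zero hd,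
    Fintype.expect_const, mul_zero, add_zero]

lemma expect_norm_add_pow_four_le [Nonempty κ] {d : κ → E} (hd : ∑ x, d x = 0) (b : E) :
    𝔼 x, ‖b + d x‖ ^ 4 ≤
      ‖b‖ ^ 4 + 8 * 𝔼 x, ‖b‖ ^ 2 * ‖d x‖ ^ 2 + 3 * 𝔼 x, ‖d x‖ ^ 4 := by
  refine (expect_le_expect fun x _ ↦ norm_add_pow_four_le b (d x)).trans_eq ?_
  simp only [expect_add_distrib, ← mul_expect, expect_inner_eq_zero hd,
    Fintype.expect_const, mul_zero, add_zero]

lemma expect_expect_norm_add_sq [Nonempty κ] {B : Ω → E} {D : κ → Ω → E}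
    (hD : ∀ f, ∑ x, D x f = 0) :
    𝔼 x, 𝔼 f, ‖B f + D x f‖ ^ 2 = 𝔼 f, ‖B f‖ ^ 2 + 𝔼 x, 𝔼 f, ‖D x f‖ ^ 2 := by
  rw [expect_comm, expect_comm univ univ fun x f ↦ ‖D x f‖ ^ 2, ← expect_add_distrib]
  exact expect_congr rfl fun f _ ↦ expect_norm_add_sq (hD f) (B f)

lemma expect_expect_norm_add_pow_four_le [Nonempty κ] {B : Ω → E} {D : κ → Ω → E}
    (hD : ∀ f, ∑ x, D x f = 0) :
    𝔼 x, 𝔼 f, ‖B f + D x f‖ ^ 4 ≤ 𝔼 f, ‖B f‖ ^ 4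
      + 8 * 𝔼 x, 𝔼 f, ‖B f‖ ^ 2 * ‖D x f‖ ^ 2 + 3 * 𝔼 x, 𝔼 f, ‖D x f‖ ^ 4 := by
  rw [expect_comm]
  refine (expect_le_expect fun f _ ↦ expect_norm_add_pow_four_le (hD f) (B f)).trans_eq ?_
  simp only [expect_add_distrib, ← mul_expect, expect_comm univ (univ : Finset Ω)]

lemma expect_norm_add_pow_four_le_mul_sq [Nonempty κ] {B : Ω → E} {D : κ → Ω → E} {C k : ℝ}
    (hC : 2 ≤ C) (hκ : 3 * Fintype.card κ ≤ C ^ 4) (hk : 0 ≤ k) (hD_sum : ∀ f, ∑ x, D x f = 0)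
    (hB : 𝔼 f, ‖B f‖ ^ 4 ≤ C ^ 4 * k * (𝔼 f, ‖B f‖ ^ 2) ^ 2)
    (hD : ∀ x, 𝔼 f, ‖D x f‖ ^ 4 ≤ k * (𝔼 f, ‖D x f‖ ^ 2) ^ 2) :
    𝔼 x, 𝔼 f, ‖B f + D x f‖ ^ 4 ≤ C ^ 4 * k * (𝔼 x, 𝔼 f, ‖B f + D x f‖ ^ 2) ^ 2 := by
  set b := 𝔼 f, ‖B f‖ ^ 2
  set d : κ → ℝ := fun x ↦ 𝔼 f, ‖D x f‖ ^ 2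
  have : 0 ≤ b := by positivity
  have hd : ∀ x, 0 ≤ d x := fun x ↦ by positivity
  have cross_terms : 𝔼 x, 𝔼 f, ‖B f‖ ^ 2 * ‖D x f‖ ^ 2 ≤ C ^ 2 * k * (b * 𝔼 x, d x) := by
    simp only [mul_expect]
    exact expect_le_expect fun x _ ↦ expect_norm_sq_mul_norm_sq_le hk hB (hD x)
  have deviation_terms : 𝔼 x, 𝔼 f, ‖D x f‖ ^ 4 ≤ k * (Fintype.card κ * (𝔼 x, d x) ^ 2) :=
    calc 𝔼 x, 𝔼 f, ‖D x f‖ ^ 4 ≤ 𝔼 x, k * d x ^ 2 := expect_le_expect fun x _ ↦ hD x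
      _ = k * 𝔼 x, d x ^ 2 := (mul_expect ..).symm
      _ ≤ _ := by gcongr; exact expect_sq_le_card_mul_sq_expect hd
  have eight_le : 8 * C ^ 2 ≤ 2 * C ^ 4 :=
    calc 8 * C ^ 2 = 2 * (2 ^ 2 * C ^ 2) := by ring
      _ ≤ 2 * (C ^ 2 * C ^ 2) := by gcongr
      _ = 2 * C ^ 4 := by ring
  calc 𝔼 x, 𝔼 f, ‖B f + D x f‖ ^ 4
      ≤ 𝔼 f, ‖B f‖ ^ 4 + 8 * 𝔼 x, 𝔼 f, ‖B f‖ ^ 2 * ‖D x f‖ ^ 2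
          + 3 * 𝔼 x, 𝔼 f, ‖D x f‖ ^ 4 := expect_expect_norm_add_pow_four_le hD_sum
    _ ≤ C ^ 4 * k * b ^ 2 + 8 * (C ^ 2 * k * (b * 𝔼 x, d x))
          + 3 * (k * (Fintype.card κ * (𝔼 x, d x) ^ 2)) := by gcongr
    _ = C ^ 4 * k * b ^ 2 + 8 * C ^ 2 * (k * (b * 𝔼 x, d x))
          + 3 * Fintype.card κ * (k * (𝔼 x, d x) ^ 2) := by ring
    _ ≤ C ^ 4 * k * b ^ 2 + 2 * C ^ 4 * (k * (b * 𝔼 x, d x))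
          + C ^ 4 * (k * (𝔼 x, d x) ^ 2) := by gcongr
    _ = C ^ 4 * k * (𝔼 x, 𝔼 f, ‖B f + D x f‖ ^ 2) ^ 2 := by
        rw [expect_expect_norm_add_sq hD_sum]
        ring

end Moments

section Degree

open Finset

variable {ι X E : Type*} [AddCommGroup E] [Module ℝ E]

/-- Functions `(ι → X) → E` of degree at most `t` in the Efron–Stein sense: the span of the
functions that depend on at most `t` coordinates. For `X = F₃` this is the space of functions
whose Fourier support lies on the levels at most `t`, and unlike the latter it makes sense for every
alphabet `X`. -/
def degreeLE (ι X E : Type*) [AddCommGroup E] [Module ℝ E] (t : ℕ) :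
    Submodule ℝ ((ι → X) → E) :=
  Submodule.span ℝ {A | ∃ S : Finset ι, #S ≤ t ∧ DependsOn A (S : Set ι)}

lemma mem_degreeLE_of_dependsOn {A : (ι → X) → E} {S : Finset ι} {t : ℕ}
    (hA : DependsOn A (S : Set ι)) (hS : #S ≤ t) : A ∈ degreeLE ι X E t :=
  Submodule.subset_span ⟨S, hS, hA⟩

lemma eq_of_mem_degreeLE_zero {A : (ι → X) → E} (hA : A ∈ degreeLE ι X E 0) (f g : ι → X) :
    A f = A g := by
  refine LinearMap.eqOn_span (f := LinearMap.proj (R := ℝ) f) (g := LinearMap.proj g) ?_ hA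
  rintro B ⟨S, hS, hB⟩
  rw [Nat.le_zero, card_eq_zero] at hS
  exact hB fun i hi ↦ by simp [hS] at hi

variable {n : ℕ}

/-- The restriction of a function of `n + 1` coordinates to the slice where coordinate `0` is `x`,
as a function of the other `n` coordinates. -/
def slice (x : X) : ((Fin (n + 1) → X) → E) →ₗ[ℝ] ((Fin n → X) → E) :=
  LinearMap.funLeft ℝ E (Fin.cons (α := fun _ ↦ X) x)

lemma dependsOn_slice {A : (Fin (n + 1) → X) → E} {S : Finset (Fin (n + 1))}
    (hA : DependsOn A (S : Set (Fin (n + 1)))) (x : X) :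
    DependsOn (slice x A) (({i | i.succ ∈ S} : Finset (Fin n)) : Set (Fin n)) := by
  refine fun f g hfg ↦ hA fun i ↦ ?_
  cases i using Fin.cases with
  | zero => simp
  | succ i => simpa using hfg i

lemma slice_eq_slice_of_dependsOn {A : (Fin (n + 1) → X) → E} {S : Finset (Fin (n + 1))}
    (hA : DependsOn A (S : Set (Fin (n + 1)))) (h0 : 0 ∉ S) (x y : X) :
    slice x A = slice y A := by
  refine funext fun f ↦ hA fun i hi ↦ ?_
  cases i using Fin.cases with
  | zero => exact absurd hi h0
  | succ i => simp

lemma card_filter_succ_mem_le (S : Finset (Fin (n + 1))) :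
    #{i : Fin n | i.succ ∈ S} ≤ #(S.erase 0) :=
  card_le_card_of_injOn Fin.succ (fun i hi ↦ by simpa using hi) (Fin.succ_injective n).injOn

lemma slice_mem_degreeLE {t : ℕ} {A : (Fin (n + 1) → X) → E}
    (hA : A ∈ degreeLE (Fin (n + 1)) X E t) (x : X) :
    slice x A ∈ degreeLE (Fin n) X E t := by
  refine (Submodule.span_le (p := (degreeLE (Fin n) X E t).comap (slice x))).mpr ?_ hA
  rintro B ⟨S, hS, hB⟩
  exact mem_degreeLE_of_dependsOn (dependsOn_slice hB x)
    ((card_filter_succ_mem_le S).trans (card_erase_le.trans hS))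

lemma slice_sub_slice_mem_degreeLE {t : ℕ} {A : (Fin (n + 1) → X) → E}
    (hA : A ∈ degreeLE (Fin (n + 1)) X E (t + 1)) (x y : X) :
    slice x A - slice y A ∈ degreeLE (Fin n) X E t := by
  refine (Submodule.span_le
    (p := (degreeLE (Fin n) X E t).comap (slice x - slice y))).mpr ?_ hA
  rintro B ⟨S, hS, hB⟩
  change slice x B - slice y B ∈ degreeLE (Fin n) X E t
  by_cases h0 : 0 ∈ S
  · have hcard : #{i : Fin n | i.succ ∈ S} ≤ t := by
      have := card_filter_succ_mem_le S
      rw [card_erase_of_mem h0] at this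
      omega
    exact sub_mem (mem_degreeLE_of_dependsOn (dependsOn_slice hB x) hcard)
      (mem_degreeLE_of_dependsOn (dependsOn_slice hB y) hcard)
  · rw [slice_eq_slice_of_dependsOn hB h0 x y, sub_self]
    exact zero_mem _

variable [Fintype X]

/-- The average of a function of `n + 1` coordinates over coordinate `0`. -/
noncomputable def sliceMean (A : (Fin (n + 1) → X) → E) : (Fin n → X) → E :=
  (Fintype.card X : ℝ)⁻¹ • ∑ x, slice x A

lemma sliceMean_mem_degreeLE {t : ℕ} {A : (Fin (n + 1) → X) → E}
    (hA : A ∈ degreeLE (Fin (n + 1)) X E t) : sliceMean A ∈ degreeLE (Fin n) X E t :=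
  Submodule.smul_mem _ _ (sum_mem fun x _ ↦ slice_mem_degreeLE hA x)

variable [Nonempty X]

lemma card_smul_sliceMean (A : (Fin (n + 1) → X) → E) :
    (Fintype.card X : ℝ) • sliceMean A = ∑ x, slice x A :=
  smul_inv_smul₀ (by simp) _

lemma sum_slice_sub_sliceMean (A : (Fin (n + 1) → X) → E) :
    ∑ x, (slice x A - sliceMean A) = 0 := by
  rw [sum_sub_distrib, sum_const, card_univ, ← Nat.cast_smul_eq_nsmul ℝ, card_smul_sliceMean,
    sub_self]

lemma slice_sub_sliceMean_mem_degreeLE {t : ℕ} {A : (Fin (n + 1) → X) → E}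
    (hA : A ∈ degreeLE (Fin (n + 1)) X E (t + 1)) (x : X) :
    slice x A - sliceMean A ∈ degreeLE (Fin n) X E t := by
  have mean_of_differences : slice x A - sliceMean A =
      (Fintype.card X : ℝ)⁻¹ • ∑ y, (slice x A - slice y A) := by
    rw [eq_inv_smul_iff₀ (by simp), smul_sub, card_smul_sliceMean, sum_sub_distrib, sum_const,
      card_univ, Nat.cast_smul_eq_nsmul]
  rw [mean_of_differences]
  exact Submodule.smul_mem _ _ (sum_mem fun y _ ↦ slice_sub_slice_mem_degreeLE hA x y)

end Degree

section Hypercontractivity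

open Finset

variable {n t : ℕ} {X E : Type*} [Fintype X] [NormedAddCommGroup E] [InnerProductSpace ℝ E]

lemma expect_fin_cons (g : (Fin (n + 1) → X) → ℝ) :
    𝔼 f, g f = 𝔼 x, 𝔼 f : Fin n → X, g (Fin.cons x f) := by
  rw [← expect_product', univ_product_univ]
  exact (Fintype.expect_equiv (Fin.consEquiv fun _ ↦ X) _ _ fun _ ↦ rfl).symm

lemma expect_norm_pow_four_le_of_mem_degreeLE [Nonempty X] {C : ℝ} (hC : 2 ≤ C)
    (hX : 3 * Fintype.card X ≤ C ^ 4) {A : (Fin n → X) → E} (hA : A ∈ degreeLE (Fin n) X E t) :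
    𝔼 f, ‖A f‖ ^ 4 ≤ (C ^ 4) ^ t * (𝔼 f, ‖A f‖ ^ 2) ^ 2 := by
  induction n generalizing t with
  | zero =>
    rw [expect_norm_pow_four_eq_of_forall_eq fun f g ↦ congrArg A (Subsingleton.elim f g)]
    exact le_mul_of_one_le_left (by positivity)
      (one_le_pow₀ (one_le_pow₀ (one_le_two.trans hC)))
  | succ n ih =>
    cases t with
    | zero =>
      rw [expect_norm_pow_four_eq_of_forall_eq (eq_of_mem_degreeLE_zero hA), pow_zero, one_mul]
    | succ t =>
      let D (x : X) := slice x A - sliceMean A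
      have hD_sum (f) : ∑ x, D x f = 0 := by
        rw [← Finset.sum_apply, sum_slice_sub_sliceMean, Pi.zero_apply]
      have slice_eq (x f) : A (Fin.cons x f) = sliceMean A f + D x f :=
        (add_sub_cancel (sliceMean A f) (slice x A f)).symm
      simp only [expect_fin_cons, slice_eq, pow_succ' (C ^ 4) t]
      exact expect_norm_add_pow_four_le_mul_sq hC hX (by positivity) hD_sum
        (by simpa only [pow_succ'] using ih (sliceMean_mem_degreeLE hA))
        fun x ↦ ih (slice_sub_sliceMean_mem_degreeLE hA x)

end Hypercontractivity

section ExpectNorm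

variable {Ω E : Type*} [Fintype Ω] [NormedAddCommGroup E]

/-- The `L^q` norm `(𝔼 ‖A‖ ^ q) ^ (1 / q)` with respect to the uniform probability measure on a
finite type; `normqV` is the case of complex functions on `F₃^R`. -/
noncomputable def expectNorm (q : ℝ) (A : Ω → E) : ℝ :=
  (𝔼 f, ‖A f‖ ^ q) ^ (1 / q)

lemma expectNorm_nonneg (q : ℝ) (A : Ω → E) : 0 ≤ expectNorm q A := by
  unfold expectNorm
  positivity

lemma expectNorm_pow {q : ℕ} (hq : q ≠ 0) (A : Ω → E) :
    expectNorm q A ^ q = 𝔼 f, ‖A f‖ ^ q := by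
  unfold expectNorm
  rw [one_div, Real.rpow_inv_natCast_pow (by positivity) hq]
  simp only [Real.rpow_natCast]

lemma expectNorm_four_le_mul_expectNorm_two {c : ℝ} (hc : 0 ≤ c) {A : Ω → E}
    (h : 𝔼 f, ‖A f‖ ^ 4 ≤ c ^ 4 * (𝔼 f, ‖A f‖ ^ 2) ^ 2) :
    expectNorm 4 A ≤ c * expectNorm 2 A := by
  refine le_of_pow_le_pow_left₀ four_ne_zero (mul_nonneg hc (expectNorm_nonneg 2 A)) ?_
  calc expectNorm 4 A ^ 4 = 𝔼 f, ‖A f‖ ^ 4 := mod_cast expectNorm_pow four_ne_zero A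
    _ ≤ c ^ 4 * (𝔼 f, ‖A f‖ ^ 2) ^ 2 := h
    _ = c ^ 4 * (expectNorm 2 A ^ 2) ^ 2 := by
      rw [← expectNorm_pow two_ne_zero, Nat.cast_ofNat]
    _ = (c * expectNorm 2 A) ^ 4 := by ring

end ExpectNorm

section Fourier

open Finset ZMod

lemma normqV_eq_expectNorm {R : ℕ} (q : ℝ) (A : (Fin R → F3) → ℂ) :
    normqV q A = expectNorm q A := by
  simp [normqV, expectNorm, Fintype.expect_eq_sum_div_card]

lemma sum_addChar_dotProduct {ι S K : Type*} [Fintype ι] [DecidableEq ι] [CommRing S] [Fintype S]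
    [DecidableEq S] [CommRing K] [IsDomain K] {ψ : AddChar S K} (hψ : ψ.IsPrimitive) (h : ι → S) :
    ∑ α : ι → S, ψ (α ⬝ᵥ h) = if h = 0 then (Fintype.card S : K) ^ Fintype.card ι else 0 := by
  calc ∑ α : ι → S, ψ (α ⬝ᵥ h) = ∏ i, ∑ a, ψ (a * h i) := by
        rw [prod_univ_sum, Fintype.piFinset_univ]
        exact sum_congr rfl fun α _ ↦
          map_prod ψ.toMonoidHom (fun i ↦ Multiplicative.ofAdd (α i * h i)) univ
    _ = ∏ i, if h i = 0 then (Fintype.card S : K) else 0 := by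
        simp only [AddChar.sum_mulShift _ hψ, Nat.cast_ite, Nat.cast_zero]
    _ = _ := by simp [Fintype.prod_ite_zero, funext_iff]

variable {R : ℕ}

lemma chiV_eq_stdAddChar (α f : Fin R → F3) : chiV α f = stdAddChar (α ⬝ᵥ f) := by
  rw [chiV, ω, ← Complex.exp_nat_mul, stdAddChar_apply, toCircle_apply, dotProduct]
  congr 1
  push_cast
  ring

lemma conj_chiV_mul_chiV (α f g : Fin R → F3) :
    starRingEnd ℂ (chiV α g) * chiV α f = stdAddChar (α ⬝ᵥ (f - g)) := by
  rw [chiV_eq_stdAddChar, chiV_eq_stdAddChar, ← AddChar.map_neg_eq_conj,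
    ← AddChar.map_add_eq_mul, dotProduct_sub, neg_add_eq_sub]

lemma sum_fourierV_mul_chiV (A : (Fin R → F3) → ℂ) (f : Fin R → F3) :
    ∑ α, fourierV A α * chiV α f = A f := by
  calc ∑ α, fourierV A α * chiV α f
      = (∑ g, A g * ∑ α, stdAddChar (α ⬝ᵥ (f - g))) / 3 ^ R := by
        simp only [fourierV, div_mul_eq_mul_div, ← sum_div, sum_mul, mul_assoc,
          conj_chiV_mul_chiV, mul_sum]
        rw [sum_comm]
    _ = A f := by
        simp [sum_addChar_dotProduct (isPrimitive_stdAddChar 3), sub_eq_zero, -dotProduct_sub]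

lemma dependsOn_chiV (α : Fin R → F3) :
    DependsOn (chiV α) (({i | α i ≠ 0} : Finset (Fin R)) : Set (Fin R)) := by
  intro f g hfg
  unfold chiV
  congr 2
  refine sum_congr rfl fun i _ ↦ ?_
  by_cases hi : α i = 0
  · simp [hi]
  · rw [hfg i (by simpa using hi)]

lemma mem_degreeLE_of_fourierV_eq_zero {t : ℕ} {A : (Fin R → F3) → ℂ}
    (hA : ∀ α, t < suppV α → fourierV A α = 0) : A ∈ degreeLE (Fin R) F3 ℂ t := by
  have inversion : A = ∑ α, fun f ↦ fourierV A α * chiV α f :=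
    funext fun f ↦ by rw [Finset.sum_apply, sum_fourierV_mul_chiV]
  rw [inversion]
  refine sum_mem fun α _ ↦ ?_
  rcases le_or_gt (suppV α) t with hα | hα
  · exact mem_degreeLE_of_dependsOn
      (fun f g hfg ↦ congrArg (fourierV A α * ·) (dependsOn_chiV α hfg)) hα
  · simp only [hA α hα, zero_mul]
    exact zero_mem _

end Fourier

theorem stmt11_general {X E : Type*} [Fintype X] [Nonempty X] [NormedAddCommGroup E]
    [InnerProductSpace ℝ E] {C : ℝ} (hC : 2 ≤ C) (hX : 3 * Fintype.card X ≤ C ^ 4) {n t : ℕ}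
    {A : (Fin n → X) → E} (hA : A ∈ degreeLE (Fin n) X E t) :
    expectNorm 4 A ≤ C ^ t * expectNorm 2 A :=
  expectNorm_four_le_mul_expectNorm_two (by positivity) <| by
    simpa only [← pow_mul, mul_comm t 4] using expect_norm_pow_four_le_of_mem_degreeLE hC hX hA

/-- Hypercontractivity on the full cube (Lemma 3.2): there is a universal `C` such that any
function on `F₃^R` with Fourier support on levels at most `t` satisfies
`‖A‖₄ ≤ C^t ‖A‖₂`. -/
theorem stmt11 :
    ∃ C : ℝ, 0 < C ∧
      ∀ R t : ℕ, ∀ A : (Fin R → F3) → ℂ,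
        (∀ α : Fin R → F3, t < suppV α → fourierV A α = 0) →
        normqV 4 A ≤ C ^ t * normqV 2 A := by
  refine ⟨2, two_pos, fun R t A hA ↦ ?_⟩
  simpa only [normqV_eq_expectNorm] using
    stmt11_general le_rfl (by norm_num) (mem_degreeLE_of_fourierV_eq_zero hA)
end

section
/- There is a universal constant C > 0 such that for all r, d, t ∈ ℕ with 4t ≤ 3^{d−1}, and every function A : P_{r,2d} → ℂ with Â(α) = 0 for all α ∈ Λ_{r,2d} with |α| > t, one has ‖A‖₄ ≤ C^t·‖A‖₂. -/
/-!
Write `q = |F|`, and call the largest Hamming weight in the Fourier support of a function its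
degree. Functions on `F^ι` of degree at most `t` satisfy `‖·‖₄ ≤ q^t ‖·‖₂`, by induction on the
coordinates: expand in the characters of one coordinate; the coefficients of the nontrivial
characters have degree at most `t - 1`. On a linear code `V`, weights are taken minimal modulo
`V^⊥`, and a function of degree at most `t` on `V` extends to one of degree at most `t` on the whole
space. If `V^⊥` has no nonzero vector of weight at most `4t`, the extension has the same second and
fourth moments on `V` as on the whole space, because `‖·‖²` and `‖·‖⁴` have degrees at most `2t` and
`4t`.

The Reed–Muller code of order `(q - 1)d` has no nonzero dual vector of weight at most `q^d`: given
`x` outside a set `S` with fewer than `q^d` points, some affine form `L` vanishing at `x` vanishes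
on at most `1/q` of `S`, and `1 - L^(q - 1)` kills the rest of `S` while being `1` at `x`. After `d`
such factors, `x` is separated from `S`.
-/

open scoped BigOperators

abbrev Pt (r : ℕ) := Fin r → F3
abbrev Fn (r : ℕ) := Pt r → F3

/-- The set of functions `F₃^r → F₃` computed by polynomials of total degree at most `d`
with individual degrees at most `2`. -/
def PolySet (r d : ℕ) : Set (Fn r) :=
  {g | ∃ P : MvPolynomial (Fin r) F3,
        P.totalDegree ≤ d ∧ (∀ i, P.degreeOf i ≤ 2) ∧
        ∀ x, g x = MvPolynomial.eval x P}

noncomputable def polyFinset (r d : ℕ) : Finset (Fn r) :=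
  (Set.toFinite (PolySet r d)).toFinset

/-- Support size `|β|`. -/
def supp {r : ℕ} (β : Fn r) : ℕ := (Finset.univ.filter fun x => β x ≠ 0).card

/-- Dot product `⟨β, f⟩ = Σ_x β(x) f(x)` in `F₃`. -/
def dotF {r : ℕ} (β f : Fn r) : F3 := ∑ x, β x * f x

/-- The character `χ_β(f) = ω^{⟨β,f⟩}`. -/
noncomputable def chi {r : ℕ} (β f : Fn r) : ℂ := ω ^ (dotF β f).val

/-- The dual `S^⊥` of a set of functions. -/
def dualSet (r : ℕ) (S : Set (Fn r)) : Set (Fn r) := {g | ∀ h ∈ S, dotF g h = 0}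

/-- `Λ` contains exactly one representative, of minimal support size, from each coset
of `𝔉_r` modulo `P_{r,d}^⊥`. -/
def IsMinRepSet (r d : ℕ) (Λ : Finset (Fn r)) : Prop :=
  (∀ β : Fn r, ∃! β', β' ∈ Λ ∧ β - β' ∈ dualSet r (PolySet r d)) ∧
  (∀ β' ∈ Λ, ∀ γ : Fn r, β' - γ ∈ dualSet r (PolySet r d) → supp β' ≤ supp γ)

/-- The noise `a·(p² + 1)` (pointwise). -/
def shift {r : ℕ} (p : Fn r) (a : F3) : Fn r := fun x => a * (p x ^ 2 + 1)

/-- Fourier coefficient `Â(β)` of a function on `P_{r,d}`. -/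
noncomputable def fourierP (r d : ℕ) (A : Fn r → ℂ) (β : Fn r) : ℂ :=
  (∑ g ∈ polyFinset r d, A g * (starRingEnd ℂ) (chi β g)) / ((polyFinset r d).card : ℂ)

/-- Expectation `E_{f ∈ P_{r,d}}[A(f)]`. -/
noncomputable def expP (r d : ℕ) (A : Fn r → ℝ) : ℝ :=
  (∑ f ∈ polyFinset r d, A f) / ((polyFinset r d).card : ℝ)

/-- Degree-`k` influence `Inf_x^{≤k}(A)` with respect to a set `Λ` of minimal-support
coset representatives. -/
noncomputable def infP (r d k : ℕ) (Λ : Finset (Fn r)) (A : Fn r → ℝ) (x : Pt r) : ℝ :=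
  ∑ β ∈ Λ.filter (fun β => β x ≠ 0 ∧ supp β ≤ k),
    ‖fourierP r d (fun g => (A g : ℂ)) β‖ ^ 2

/-- `L^q` norm `(E_{f ∈ P_{r,d}} |A(f)|^q)^{1/q}`. -/
noncomputable def normqP (r d : ℕ) (q : ℝ) (A : Fn r → ℂ) : ℝ :=
  ((∑ f ∈ polyFinset r d, ‖A f‖ ^ q) / ((polyFinset r d).card : ℝ)) ^ (1 / q)

section Hamming

variable {R ι : Type*} [Fintype ι] [DecidableEq R]

theorem hammingNorm_neg [AddGroup R] (γ : ι → R) : hammingNorm (-γ) = hammingNorm γ :=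
  hammingNorm_comp (fun _ => Neg.neg) (fun _ => neg_injective) fun _ => neg_zero

theorem hammingNorm_add_le [AddGroup R] (γ δ : ι → R) :
    hammingNorm (γ + δ) ≤ hammingNorm γ + hammingNorm δ := by
  have := hammingDist_triangle (-γ) 0 δ
  rwa [hammingDist_zero_right, hammingDist_zero_left, hammingNorm_neg,
    hammingDist_eq_hammingNorm, neg_neg] at this

theorem hammingNorm_comp_equiv {κ : Type*} [Fintype κ] [Zero R] (e : κ ≃ ι) (γ : ι → R) :
    hammingNorm (γ ∘ e) = hammingNorm γ :=
  Finset.card_equiv e (by simp)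

theorem hammingNorm_option [Zero R] (γ : Option ι → R) :
    hammingNorm γ = (if γ none = 0 then 0 else 1) + hammingNorm (γ ∘ some) := by
  simp [hammingNorm, Finset.card_filter, Fintype.sum_option]

end Hamming

section DotChar

open Finset

variable {R ι : Type*} [CommRing R] [Fintype ι]

/-- The character `χ_γ : f ↦ ψ ⟨γ, f⟩` of the group `ι → R`. -/
def dotChar (ψ : AddChar R ℂ) (γ : ι → R) : AddChar (ι → R) ℂ :=
  ψ.compAddMonoidHom (dotProductBilin R R γ).toAddMonoidHom

theorem dotChar_apply (ψ : AddChar R ℂ) (γ f : ι → R) : dotChar ψ γ f = ψ (γ ⬝ᵥ f) := rfl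

theorem dotChar_add_left (ψ : AddChar R ℂ) (γ δ f : ι → R) :
    dotChar ψ (γ + δ) f = dotChar ψ γ f * dotChar ψ δ f := by
  simp only [dotChar_apply, add_dotProduct, AddChar.map_add_eq_mul]

theorem dotChar_comm (ψ : AddChar R ℂ) (γ f : ι → R) : dotChar ψ γ f = dotChar ψ f γ := by
  rw [dotChar_apply, dotChar_apply, dotProduct_comm]

/-- The dual code `V^⊥`, consisting of all `γ` orthogonal to every codeword of `V`. -/
def dualCode (V : Submodule R (ι → R)) : Submodule R (ι → R) where
  carrier := {γ | ∀ g ∈ V, γ ⬝ᵥ g = 0}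
  add_mem' hγ hδ g hg := by rw [add_dotProduct, hγ g hg, hδ g hg, add_zero]
  zero_mem' g _ := zero_dotProduct g
  smul_mem' a γ hγ g hg := by rw [smul_dotProduct, hγ g hg, smul_zero]

theorem dualCode_top : dualCode (⊤ : Submodule R (ι → R)) = ⊥ :=
  (Submodule.eq_bot_iff _).2 fun _ hγ => dotProduct_eq_zero _ fun g => hγ g trivial

variable {ψ : AddChar R ℂ} {V : Submodule R (ι → R)} {γ δ : ι → R}

theorem dotChar_conj [Finite R] (ψ : AddChar R ℂ) (γ f : ι → R) :
    starRingEnd ℂ (dotChar ψ γ f) = dotChar ψ (-γ) f := by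
  rw [dotChar_comm ψ (-γ), AddChar.map_neg_eq_conj, dotChar_comm]

theorem dotChar_congr (h : γ - δ ∈ dualCode V) {f : ι → R} (hf : f ∈ V) :
    dotChar ψ γ f = dotChar ψ δ f := by
  have hdot : γ ⬝ᵥ f = δ ⬝ᵥ f := by rw [← sub_eq_zero, ← sub_dotProduct, h f hf]
  rw [dotChar_apply, dotChar_apply, hdot]

theorem exists_dotChar_ne_one (hψ : ψ.IsPrimitive) (hγ : γ ∉ dualCode V) :
    ∃ g ∈ V, dotChar ψ γ g ≠ 1 := by
  obtain ⟨g, hg, hne⟩ : ∃ g ∈ V, γ ⬝ᵥ g ≠ 0 := by simpa [dualCode] using hγ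
  obtain ⟨a, ha⟩ := AddChar.ne_one_iff.1 (hψ hne)
  refine ⟨a • g, V.smul_mem a hg, ?_⟩
  rwa [dotChar_apply, dotProduct_smul, smul_eq_mul, mul_comm, ← AddChar.mulShift_apply]

theorem expect_dotChar_submodule [Fintype V] (hψ : ψ.IsPrimitive) [Decidable (γ ∈ dualCode V)] :
    𝔼 f : V, dotChar ψ γ f = if γ ∈ dualCode V then 1 else 0 := by
  let χ : AddChar V ℂ := (dotChar ψ γ).compAddMonoidHom V.subtype.toAddMonoidHom
  split_ifs with h
  · have hχ : ∀ f : V, dotChar ψ γ f = 1 := fun f => by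
      rw [dotChar_apply, h f f.2, AddChar.map_zero_eq_one]
    simp only [hχ, Fintype.expect_const]
  · obtain ⟨g, hg, hne⟩ := exists_dotChar_ne_one hψ h
    exact AddChar.expect_eq_zero_iff_ne_zero.2 (AddChar.ne_zero_iff.2 ⟨(⟨g, hg⟩ : V), hne⟩ : χ ≠ 0)

theorem expect_dotChar [Fintype R] [DecidableEq ι] [DecidableEq R] (hψ : ψ.IsPrimitive) :
    𝔼 f, dotChar ψ γ f = if γ = 0 then 1 else 0 := by
  classical
  rw [← Fintype.expect_equiv (Submodule.topEquiv (R := R)).toEquiv (fun f => dotChar ψ γ f) _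
    fun _ => rfl, expect_dotChar_submodule hψ]
  exact if_congr (by rw [dualCode_top, Submodule.mem_bot]) rfl rfl

end DotChar

section FourierDegree

variable {R ι : Type*} [CommRing R] [DecidableEq R] [Fintype ι]

/-- The functions on `ι → R` of Fourier degree at most `t`: the combinations of the characters
`χ_γ` with `γ` of Hamming weight at most `t`. -/
def fourierDegreeLE (ψ : AddChar R ℂ) (t : ℕ) : Submodule ℂ ((ι → R) → ℂ) :=
  Submodule.span ℂ ((fun γ => ⇑(dotChar ψ γ)) '' {γ | hammingNorm γ ≤ t})

variable {ψ : AddChar R ℂ} {s t : ℕ} {F G : (ι → R) → ℂ}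

theorem dotChar_mem_fourierDegreeLE {γ : ι → R} (h : hammingNorm γ ≤ t) :
    ⇑(dotChar ψ γ) ∈ fourierDegreeLE ψ t :=
  Submodule.subset_span ⟨γ, h, rfl⟩

@[elab_as_elim]
theorem fourierDegreeLE_induction {p : (F : (ι → R) → ℂ) → F ∈ fourierDegreeLE ψ t → Prop}
    (dotChar : ∀ γ (h : hammingNorm γ ≤ t), p (dotChar ψ γ) (dotChar_mem_fourierDegreeLE h))
    (zero : p 0 (Submodule.zero_mem _))
    (add : ∀ F G hF hG, p F hF → p G hG → p (F + G) (Submodule.add_mem _ hF hG))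
    (smul : ∀ (c : ℂ) (F) (hF), p F hF → p (c • F) (Submodule.smul_mem _ c hF))
    {F : (ι → R) → ℂ} (hF : F ∈ fourierDegreeLE ψ t) : p F hF :=
  Submodule.span_induction (fun _ ⟨γ, h, e⟩ => by subst e; exact dotChar γ h) zero add smul hF

theorem mul_mem_fourierDegreeLE (hF : F ∈ fourierDegreeLE ψ s) (hG : G ∈ fourierDegreeLE ψ t) :
    F * G ∈ fourierDegreeLE ψ (s + t) := by
  induction hF using fourierDegreeLE_induction with
  | dotChar γ hγ =>
    induction hG using fourierDegreeLE_induction with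
    | dotChar δ hδ =>
      have hmul : ⇑(dotChar ψ γ) * ⇑(dotChar ψ δ) = dotChar ψ (γ + δ) :=
        funext fun f => (dotChar_add_left ψ γ δ f).symm
      rw [hmul]
      exact dotChar_mem_fourierDegreeLE ((hammingNorm_add_le γ δ).trans (add_le_add hγ hδ))
    | zero => simp only [mul_zero, Submodule.zero_mem]
    | add G G' _ _ hG hG' => rw [mul_add]; exact Submodule.add_mem _ hG hG'
    | smul c G _ hG => rw [mul_smul_comm]; exact Submodule.smul_mem _ c hG
  | zero => simp only [zero_mul, Submodule.zero_mem]
  | add F F' _ _ hF hF' => rw [add_mul]; exact Submodule.add_mem _ hF hF'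
  | smul c F _ hF => rw [smul_mul_assoc]; exact Submodule.smul_mem _ c hF

theorem star_mem_fourierDegreeLE [Finite R] (hF : F ∈ fourierDegreeLE ψ t) :
    star F ∈ fourierDegreeLE ψ t := by
  induction hF using fourierDegreeLE_induction with
  | dotChar γ hγ =>
    have hstar : star ⇑(dotChar ψ γ) = dotChar ψ (-γ) := funext (dotChar_conj ψ γ)
    rw [hstar]
    exact dotChar_mem_fourierDegreeLE ((hammingNorm_neg γ).trans_le hγ)
  | zero => simp only [star_zero, Submodule.zero_mem]
  | add F F' _ _ hF hF' => rw [star_add]; exact Submodule.add_mem _ hF hF'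
  | smul c F _ hF => rw [star_smul]; exact Submodule.smul_mem _ _ hF

theorem norm_pow_mem_fourierDegreeLE [Finite R] (hF : F ∈ fourierDegreeLE ψ t) (k : ℕ) :
    (fun f => (‖F f‖ : ℂ) ^ (2 * k)) ∈ fourierDegreeLE ψ (2 * k * t) := by
  have hsq : F * star F ∈ fourierDegreeLE ψ (t + t) :=
    mul_mem_fourierDegreeLE hF (star_mem_fourierDegreeLE hF)
  induction k with
  | zero =>
    have hone : (fun f => (‖F f‖ : ℂ) ^ (2 * 0)) = dotChar ψ (0 : ι → R) := by
      funext f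
      rw [dotChar_apply, zero_dotProduct, AddChar.map_zero_eq_one, mul_zero, pow_zero]
    rw [hone]
    exact dotChar_mem_fourierDegreeLE (by rw [hammingNorm_zero]; exact Nat.zero_le _)
  | succ k ih =>
    have hsucc : (fun f => (‖F f‖ : ℂ) ^ (2 * (k + 1))) =
        (fun f => (‖F f‖ : ℂ) ^ (2 * k)) * (F * star F) := by
      funext f
      simp only [Pi.mul_apply, Pi.star_apply, RCLike.star_def, Complex.mul_conj', mul_add, pow_add,
        mul_one]
    rw [hsucc, show 2 * (k + 1) * t = 2 * k * t + (t + t) by ring]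
    exact mul_mem_fourierDegreeLE ih hsq

theorem exists_eq_const_of_mem_fourierDegreeLE_zero (hF : F ∈ fourierDegreeLE ψ 0) :
    ∃ c, F = Function.const _ c := by
  induction hF using fourierDegreeLE_induction with
  | dotChar γ hγ =>
    refine ⟨1, funext fun f => ?_⟩
    rw [hammingNorm_eq_zero.1 (Nat.le_zero.1 hγ), dotChar_apply, zero_dotProduct,
      AddChar.map_zero_eq_one, Function.const_apply]
  | zero => exact ⟨0, rfl⟩
  | add F G _ _ hF hG =>
    obtain ⟨⟨a, rfl⟩, b, rfl⟩ := hF, hG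
    exact ⟨a + b, rfl⟩
  | smul c F _ hF =>
    obtain ⟨a, rfl⟩ := hF
    exact ⟨c • a, rfl⟩

theorem comp_equiv_mem_fourierDegreeLE {κ : Type*} [Fintype κ] (e : ι ≃ κ)
    {F : (κ → R) → ℂ} (hF : F ∈ fourierDegreeLE ψ t) :
    (fun f : ι → R => F (f ∘ e.symm)) ∈ fourierDegreeLE ψ t := by
  induction hF using fourierDegreeLE_induction with
  | dotChar γ hγ =>
    have hcomp : (fun f : ι → R => dotChar ψ γ (f ∘ e.symm)) = dotChar ψ (γ ∘ e) := by
      funext f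
      rw [dotChar_apply, dotChar_apply, dotProduct_comp_equiv_symm]
    rw [hcomp]
    exact dotChar_mem_fourierDegreeLE ((hammingNorm_comp_equiv e γ).trans_le hγ)
  | zero => exact Submodule.zero_mem _
  | add F G _ _ hF hG => exact Submodule.add_mem _ hF hG
  | smul c F _ hF => exact Submodule.smul_mem _ c hF

theorem exists_option_decomposition_of_mem_fourierDegreeLE [Fintype R] {F : (Option ι → R) → ℂ}
    (hF : F ∈ fourierDegreeLE ψ (t + 1)) :
    ∃ G : R → (ι → R) → ℂ, G 0 ∈ fourierDegreeLE ψ (t + 1) ∧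
      (∀ a ≠ 0, G a ∈ fourierDegreeLE ψ t) ∧
      ∀ h, F h = ∑ a, G a (h ∘ some) * ψ (a * h none) := by
  induction hF using fourierDegreeLE_induction with
  | dotChar γ hγ =>
    rw [hammingNorm_option] at hγ
    refine ⟨Pi.single (γ none) (dotChar ψ (γ ∘ some)), ?_, fun a ha => ?_, fun h => ?_⟩
    · obtain h0 | h0 := eq_or_ne (γ none) 0
      · rw [h0, Pi.single_eq_same]
        exact dotChar_mem_fourierDegreeLE (by omega)
      · rw [Pi.single_eq_of_ne h0.symm]
        exact Submodule.zero_mem _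
    · obtain rfl | hne := eq_or_ne a (γ none)
      · rw [Pi.single_eq_same]
        rw [if_neg ha] at hγ
        exact dotChar_mem_fourierDegreeLE (by omega)
      · rw [Pi.single_eq_of_ne hne]
        exact Submodule.zero_mem _
    · rw [Fintype.sum_eq_single (γ none) fun a ha => by
          rw [Pi.single_eq_of_ne ha, Pi.zero_apply, zero_mul],
        Pi.single_eq_same, dotChar_apply, dotChar_apply, ← AddChar.map_add_eq_mul, dotProduct,
        Fintype.sum_option, add_comm, dotProduct]
      rfl
  | zero => exact ⟨0, Submodule.zero_mem _, fun _ _ => Submodule.zero_mem _, fun h => by simp⟩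
  | add F F' _ _ hF hF' =>
    obtain ⟨⟨G, h0, h1, h2⟩, G', h0', h1', h2'⟩ := hF, hF'
    refine ⟨G + G', Submodule.add_mem _ h0 h0',
      fun a ha => Submodule.add_mem _ (h1 a ha) (h1' a ha), fun h => ?_⟩
    simp only [Pi.add_apply, h2, h2', add_mul, Finset.sum_add_distrib]
  | smul c F _ hF =>
    obtain ⟨G, h0, h1, h2⟩ := hF
    refine ⟨c • G, Submodule.smul_mem _ c h0, fun a ha => Submodule.smul_mem _ c (h1 a ha),
      fun h => ?_⟩
    simp only [Pi.smul_apply, h2, smul_eq_mul, mul_assoc, Finset.mul_sum]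

end FourierDegree

section FourthMoment

open Finset

theorem norm_add_pow_four_le_s13 {E : Type*} [SeminormedAddCommGroup E] [InnerProductSpace ℝ E]
    (u v : E) :
    ‖u + v‖ ^ 4 ≤ ‖u‖ ^ 4 + 8 * ‖u‖ ^ 2 * ‖v‖ ^ 2 + 3 * ‖v‖ ^ 4 + 4 * ‖u‖ ^ 2 * inner ℝ u v := by
  have hsq : ‖u + v‖ ^ 4 = (‖u‖ ^ 2 + 2 * inner ℝ u v + ‖v‖ ^ 2) ^ 2 := by
    rw [← norm_add_sq_real, ← pow_mul]
  have hle := real_inner_le_norm u v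
  have hcs : inner ℝ u v ^ 2 ≤ ‖u‖ ^ 2 * ‖v‖ ^ 2 := by
    rw [← mul_pow]
    exact sq_le_sq' (neg_le_of_abs_le (abs_real_inner_le_norm u v)) hle
  have hcross : 4 * ‖v‖ ^ 2 * inner ℝ u v ≤ 2 * ‖v‖ ^ 2 * (‖u‖ ^ 2 + ‖v‖ ^ 2) := by
    nlinarith [two_mul_le_add_sq ‖u‖ ‖v‖, sq_nonneg ‖v‖]
  rw [hsq]
  linarith

theorem expect_norm_add_pow_four_le_s13 {E S : Type*} [SeminormedAddCommGroup E]
    [InnerProductSpace ℝ E] [Fintype S] [Nonempty S] (u : E) {v : S → E} (hv : ∑ s, v s = 0) :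
    𝔼 s, ‖u + v s‖ ^ 4 ≤ ‖u‖ ^ 4 + 8 * ‖u‖ ^ 2 * 𝔼 s, ‖v s‖ ^ 2 + 3 * 𝔼 s, ‖v s‖ ^ 4 := by
  have hinner : 𝔼 s, inner ℝ u (v s) = 0 := by
    rw [Fintype.expect_eq_sum_div_card, ← inner_sum, hv, inner_zero_right, zero_div]
  calc 𝔼 s, ‖u + v s‖ ^ 4
      ≤ 𝔼 s, (‖u‖ ^ 4 + 8 * ‖u‖ ^ 2 * ‖v s‖ ^ 2 + 3 * ‖v s‖ ^ 4 +
          4 * ‖u‖ ^ 2 * inner ℝ u (v s)) :=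
        expect_le_expect fun s _ => norm_add_pow_four_le_s13 u (v s)
    _ = ‖u‖ ^ 4 + 8 * ‖u‖ ^ 2 * 𝔼 s, ‖v s‖ ^ 2 + 3 * 𝔼 s, ‖v s‖ ^ 4 := by
        simp only [expect_add_distrib, ← mul_expect, hinner, Fintype.expect_const, mul_zero,
          add_zero]

variable {R : Type*} [CommRing R] [Fintype R] {ψ : AddChar R ℂ}

theorem expect_norm_sum_mul_addChar_sq (hψ : ψ.IsPrimitive) (A : Finset R) (v : R → ℂ) :
    𝔼 s, ‖∑ a ∈ A, v a * ψ (a * s)‖ ^ 2 = ∑ a ∈ A, ‖v a‖ ^ 2 := by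
  classical
  have hexpand : ∀ s, (‖∑ a ∈ A, v a * ψ (a * s)‖ : ℂ) ^ 2 =
      ∑ a ∈ A, ∑ b ∈ A, v a * starRingEnd ℂ (v b) * ψ (s * (a - b)) := fun s => by
    rw [← Complex.mul_conj', map_sum, sum_mul_sum]
    refine sum_congr rfl fun a _ => sum_congr rfl fun b _ => ?_
    rw [map_mul (starRingEnd ℂ), ← AddChar.map_neg_eq_conj, mul_mul_mul_comm,
      ← AddChar.map_add_eq_mul, ← sub_eq_add_neg, ← sub_mul, mul_comm s]
  have hdiag : ∀ a ∈ A, ∑ b ∈ A, v a * starRingEnd ℂ (v b) * 𝔼 s, ψ (s * (a - b)) =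
      (‖v a‖ : ℂ) ^ 2 := fun a ha => by
    have horth : ∀ b, 𝔼 s, ψ (s * (a - b)) = if a = b then 1 else 0 := fun b => by
      rw [Fintype.expect_eq_sum_div_card, AddChar.sum_mulShift _ hψ]
      simp only [sub_eq_zero]
      split_ifs <;> simp
    simp only [horth, mul_ite, mul_one, mul_zero, sum_ite_eq, if_pos ha, Complex.mul_conj']
  refine Complex.ofReal_injective ?_
  push_cast
  simp only [hexpand, expect_sum_comm, ← mul_expect]
  exact sum_congr rfl hdiag

theorem expect_norm_sum_mul_addChar_pow_four_le [DecidableEq R] (hψ : ψ.IsPrimitive)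
    (v : R → ℂ) :
    𝔼 s, ‖∑ a, v a * ψ (a * s)‖ ^ 4 ≤ ‖v 0‖ ^ 4 +
      8 * ‖v 0‖ ^ 2 * ∑ a ∈ univ.erase 0, ‖v a‖ ^ 2 +
      3 * ((Fintype.card R - 1 : ℝ) ^ 3 * ∑ a ∈ univ.erase 0, ‖v a‖ ^ 4) := by
  set w : R → ℂ := fun s => ∑ a ∈ univ.erase 0, v a * ψ (a * s)
  have hsplit : ∀ s, ∑ a, v a * ψ (a * s) = v 0 + w s := fun s => by
    rw [← add_sum_erase _ _ (mem_univ 0), zero_mul, AddChar.map_zero_eq_one, mul_one]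
  have hmean : ∑ s, w s = 0 := by
    rw [sum_comm]
    refine sum_eq_zero fun a ha => ?_
    simp only [← mul_sum, mul_comm a, AddChar.sum_mulShift a hψ, if_neg (ne_of_mem_erase ha),
      Nat.cast_zero, mul_zero]
  have hfour : ∀ s, ‖w s‖ ^ 4 ≤ (Fintype.card R - 1 : ℝ) ^ 3 * ∑ a ∈ univ.erase 0, ‖v a‖ ^ 4 :=
    fun s => by
    have htriangle : ‖w s‖ ≤ ∑ a ∈ univ.erase 0, ‖v a‖ :=
      (norm_sum_le _ _).trans_eq (by simp only [norm_mul, AddChar.norm_apply, mul_one])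
    rw [← card_univ, ← cast_card_erase_of_mem (mem_univ (0 : R))]
    exact (pow_le_pow_left₀ (norm_nonneg _) htriangle 4).trans
      (pow_sum_le_card_mul_sum_pow (fun a _ => norm_nonneg (v a)) 3)
  simp only [hsplit]
  refine (expect_norm_add_pow_four_le_s13 (v 0) hmean).trans ?_
  rw [expect_norm_sum_mul_addChar_sq hψ]
  gcongr
  exact (expect_le_expect fun s _ => hfour s).trans_eq (Fintype.expect_const _)

end FourthMoment

section Hypercontractivity

open Finset

theorem expect_mul_le_of_expect_sq_le {Ω : Type*} [Fintype Ω] {X Y : Ω → ℝ} {p q : ℝ} (hp : 0 ≤ p)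
    (hq : 0 ≤ q) (hX : 𝔼 x, X x ^ 2 ≤ p ^ 2) (hY : 𝔼 x, Y x ^ 2 ≤ q ^ 2) :
    𝔼 x, X x * Y x ≤ p * q :=
  abs_le_of_sq_le_sq' (((expect_mul_sq_le_sq_mul_sq _ _ _).trans (mul_le_mul hX hY
    (expect_nonneg fun _ _ => sq_nonneg _) (sq_nonneg p))).trans_eq (mul_pow p q 2).symm)
    (mul_nonneg hp hq) |>.2

theorem sq_add_cross_add_tail_le {q x y : ℝ} (K : ℝ) (hq : 2 ≤ q) (hx : 0 ≤ x) (hy : 0 ≤ y) :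
    (q ^ 2 * K * x) ^ 2 + 8 * (q ^ 2 * K ^ 2 * x * y) + 3 * ((q - 1) ^ 3 * (K ^ 2 * y ^ 2)) ≤
      (q ^ 2 * K * (x + y)) ^ 2 := by
  have hq4 : 4 ≤ q ^ 2 := by nlinarith
  have hcross : 8 * q ^ 2 ≤ 2 * q ^ 4 := by nlinarith
  have htail : 3 * (q - 1) ^ 3 ≤ q ^ 4 := by nlinarith [sq_nonneg (q ^ 2 - 3 / 2 * q)]
  have hxy : 0 ≤ K ^ 2 * (x * y) := mul_nonneg (sq_nonneg K) (mul_nonneg hx hy)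
  have hyy : 0 ≤ K ^ 2 * y ^ 2 := mul_nonneg (sq_nonneg K) (sq_nonneg y)
  linarith [mul_le_mul_of_nonneg_right hcross hxy, mul_le_mul_of_nonneg_right htail hyy]

theorem expect_norm_const_pow_four_le {Ω : Type*} [Fintype Ω] [Nonempty Ω] (c : ℂ) {K : ℝ}
    (hK : 1 ≤ K) : 𝔼 _x : Ω, ‖c‖ ^ 4 ≤ (K * 𝔼 _x : Ω, ‖c‖ ^ 2) ^ 2 := by
  rw [Fintype.expect_const, Fintype.expect_const, mul_pow, ← pow_mul]
  exact le_mul_of_one_le_left (by positivity) (one_le_pow₀ hK)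

theorem expect_option_fun {R ι M : Type*} [Fintype R] [Fintype ι] [DecidableEq ι]
    [DecidableEq (Option ι)] [AddCommMonoid M] [Module ℚ≥0 M] (Φ : R → (ι → R) → M) :
    𝔼 h : Option ι → R, Φ (h none) (h ∘ some) = 𝔼 f, 𝔼 s, Φ s f := by
  rw [expect_comm, ← expect_product', univ_product_univ]
  exact Fintype.expect_equiv Equiv.piOptionEquivProd _ _ fun _ => rfl

variable {R ι : Type*} [CommRing R] [Fintype R] [Fintype ι] [DecidableEq ι] {ψ : AddChar R ℂ}

theorem expect_norm_sq_eq_sum_of_option_decomposition [DecidableEq (Option ι)]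
    (hψ : ψ.IsPrimitive) {F : (Option ι → R) → ℂ} {G : R → (ι → R) → ℂ}
    (hFG : ∀ h, F h = ∑ a, G a (h ∘ some) * ψ (a * h none)) :
    𝔼 h, ‖F h‖ ^ 2 = ∑ a, 𝔼 f, ‖G a f‖ ^ 2 := by
  simp only [hFG, expect_option_fun fun s f => ‖∑ a, G a f * ψ (a * s)‖ ^ 2,
    expect_norm_sum_mul_addChar_sq hψ, expect_sum_comm]

variable [Nontrivial R]

theorem expect_expect_norm_sum_mul_addChar_pow_four_le (hψ : ψ.IsPrimitive) {Ω : Type*} [Fintype Ω]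
    (G : R → Ω → ℂ) {K : ℝ} (hK : 0 ≤ K)
    (h0 : 𝔼 x, ‖G 0 x‖ ^ 4 ≤ (Fintype.card R ^ 2 * K * 𝔼 x, ‖G 0 x‖ ^ 2) ^ 2)
    (h : ∀ a ≠ 0, 𝔼 x, ‖G a x‖ ^ 4 ≤ (K * 𝔼 x, ‖G a x‖ ^ 2) ^ 2) :
    𝔼 x, 𝔼 s, ‖∑ a, G a x * ψ (a * s)‖ ^ 4 ≤
      (Fintype.card R ^ 2 * K * ∑ a, 𝔼 x, ‖G a x‖ ^ 2) ^ 2 := by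
  classical
  set q : ℝ := (Fintype.card R : ℝ)
  set N : R → ℝ := fun a => 𝔼 x, ‖G a x‖ ^ 2
  set S := ∑ a ∈ univ.erase 0, N a
  have hq2 : 2 ≤ q := Nat.ofNat_le_cast.2 Fintype.one_lt_card
  have hN : ∀ a, 0 ≤ N a := fun a => expect_nonneg fun _ _ => sq_nonneg _
  have hS : 0 ≤ S := sum_nonneg fun a _ => hN a
  have hcross : 𝔼 x, ‖G 0 x‖ ^ 2 * ∑ a ∈ univ.erase 0, ‖G a x‖ ^ 2 ≤ q ^ 2 * K ^ 2 * N 0 * S := by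
    simp only [mul_sum, expect_sum_comm, S]
    refine sum_le_sum fun a ha => ?_
    have := expect_mul_le_of_expect_sq_le (X := fun x => ‖G 0 x‖ ^ 2) (Y := fun x => ‖G a x‖ ^ 2)
      (p := q ^ 2 * K * N 0) (q := K * N a) (by have := hN 0; positivity)
      (mul_nonneg hK (hN a)) (by simpa only [← pow_mul] using h0)
      (by simpa only [← pow_mul] using h a (ne_of_mem_erase ha))
    linarith
  have htail : 𝔼 x, ∑ a ∈ univ.erase 0, ‖G a x‖ ^ 4 ≤ K ^ 2 * S ^ 2 := by
    rw [expect_sum_comm]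
    calc ∑ a ∈ univ.erase 0, 𝔼 x, ‖G a x‖ ^ 4 ≤ ∑ a ∈ univ.erase 0, (K * N a) ^ 2 :=
          sum_le_sum fun a ha => h a (ne_of_mem_erase ha)
      _ = K ^ 2 * ∑ a ∈ univ.erase 0, N a ^ 2 := by simp only [mul_pow, mul_sum]
      _ ≤ K ^ 2 * S ^ 2 := by gcongr; exact sum_sq_le_sq_sum_of_nonneg fun a _ => hN a
  calc 𝔼 x, 𝔼 s, ‖∑ a, G a x * ψ (a * s)‖ ^ 4
      ≤ 𝔼 x, (‖G 0 x‖ ^ 4 + 8 * (‖G 0 x‖ ^ 2 * ∑ a ∈ univ.erase 0, ‖G a x‖ ^ 2) +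
          3 * ((q - 1) ^ 3 * ∑ a ∈ univ.erase 0, ‖G a x‖ ^ 4)) :=
        expect_le_expect fun x _ => by
          rw [← mul_assoc 8]
          exact expect_norm_sum_mul_addChar_pow_four_le hψ fun a => G a x
    _ = 𝔼 x, ‖G 0 x‖ ^ 4 + 8 * 𝔼 x, ‖G 0 x‖ ^ 2 * ∑ a ∈ univ.erase 0, ‖G a x‖ ^ 2 +
          3 * ((q - 1) ^ 3 * 𝔼 x, ∑ a ∈ univ.erase 0, ‖G a x‖ ^ 4) := by
        simp only [expect_add_distrib, mul_expect]
    _ ≤ (q ^ 2 * K * N 0) ^ 2 + 8 * (q ^ 2 * K ^ 2 * N 0 * S) +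
          3 * ((q - 1) ^ 3 * (K ^ 2 * S ^ 2)) := by gcongr; exact pow_nonneg (by linarith) 3
    _ ≤ (q ^ 2 * K * (N 0 + S)) ^ 2 := sq_add_cross_add_tail_le K hq2 (hN 0) hS
    _ = (q ^ 2 * K * ∑ a, N a) ^ 2 := by rw [add_sum_erase _ _ (mem_univ 0)]

theorem expect_norm_pow_four_le_option [DecidableEq R] [DecidableEq (Option ι)]
    (hψ : ψ.IsPrimitive)
    (ih : ∀ (t : ℕ), ∀ F ∈ fourierDegreeLE (ι := ι) ψ t,
      𝔼 f, ‖F f‖ ^ 4 ≤ (((Fintype.card R : ℝ) ^ 2) ^ t * 𝔼 f, ‖F f‖ ^ 2) ^ 2)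
    {t : ℕ} {F : (Option ι → R) → ℂ} (hF : F ∈ fourierDegreeLE ψ (t + 1)) :
    𝔼 h, ‖F h‖ ^ 4 ≤ (((Fintype.card R : ℝ) ^ 2) ^ (t + 1) * 𝔼 h, ‖F h‖ ^ 2) ^ 2 := by
  obtain ⟨G, hG0, hG, hFG⟩ := exists_option_decomposition_of_mem_fourierDegreeLE hF
  rw [expect_norm_sq_eq_sum_of_option_decomposition hψ hFG, pow_succ' _ t]
  simp only [hFG, expect_option_fun fun s f => ‖∑ a, G a f * ψ (a * s)‖ ^ 4]
  refine expect_expect_norm_sum_mul_addChar_pow_four_le hψ G (by positivity) ?_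
    fun a ha => ih t _ (hG a ha)
  rw [← pow_succ' _ t]
  exact ih (t + 1) _ hG0

theorem expect_norm_pow_four_le_of_mem_fourierDegreeLE [DecidableEq R] (hψ : ψ.IsPrimitive) {t : ℕ}
    {F : (ι → R) → ℂ} (hF : F ∈ fourierDegreeLE ψ t) :
    𝔼 f, ‖F f‖ ^ 4 ≤ (((Fintype.card R : ℝ) ^ 2) ^ t * 𝔼 f, ‖F f‖ ^ 2) ^ 2 := by
  have hcard : ∀ t : ℕ, 1 ≤ ((Fintype.card R : ℝ) ^ 2) ^ t := fun t =>
    one_le_pow₀ (one_le_pow₀ (Nat.one_le_cast.2 Fintype.card_pos))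
  refine Fintype.induction_empty_option (P := fun ι _ => ∀ [DecidableEq ι] (t : ℕ),
    ∀ F ∈ fourierDegreeLE (ι := ι) ψ t,
      𝔼 f, ‖F f‖ ^ 4 ≤ (((Fintype.card R : ℝ) ^ 2) ^ t * 𝔼 f, ‖F f‖ ^ 2) ^ 2)
    (fun α β _ e ih => ?_) ?_ (fun ι _ ih => ?_) ι t F hF
  · classical
    intro _ t F hF
    let _ := Fintype.ofEquiv β e.symm
    have hcomp : ∀ k, 𝔼 f : α → R, ‖F (f ∘ e.symm)‖ ^ k = 𝔼 f, ‖F f‖ ^ k := fun k =>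
      Fintype.expect_equiv (e.arrowCongr (Equiv.refl R)) _ _ fun _ => rfl
    simpa only [hcomp] using ih t _ (comp_equiv_mem_fourierDegreeLE e hF)
  · intro _ t F _
    obtain ⟨c, rfl⟩ : ∃ c, F = Function.const _ c :=
      ⟨F default, funext fun f => congrArg F (Subsingleton.elim _ _)⟩
    exact expect_norm_const_pow_four_le c (hcard t)
  · classical
    rintro _ (- | t) F hF
    · obtain ⟨c, rfl⟩ := exists_eq_const_of_mem_fourierDegreeLE_zero hF
      exact expect_norm_const_pow_four_le c (hcard 0)
    · exact expect_norm_pow_four_le_option hψ (fun t F h => ih t F h) hF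

end Hypercontractivity

section Code

open Finset

variable {R ι : Type*} [CommRing R] [Fintype ι] {ψ : AddChar R ℂ}
  {V : Submodule R (ι → R)} [Fintype V] {F : (ι → R) → ℂ} {t : ℕ}

/-- The Fourier coefficient `𝔼 f ∈ V, B f * conj (χ_β f)` of a function `B` on the code `V`. -/
noncomputable def codeFourier (ψ : AddChar R ℂ) (B : V → ℂ) (β : ι → R) : ℂ :=
  𝔼 f : V, B f * starRingEnd ℂ (dotChar ψ β f)

theorem codeFourier_congr {B : V → ℂ} {β γ : ι → R} (h : β - γ ∈ dualCode V) :
    codeFourier ψ B β = codeFourier ψ B γ := by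
  simp only [codeFourier, dotChar_congr h (Subtype.coe_prop _)]

theorem expect_codeFourier_mul_dotChar [Fintype R] [DecidableEq ι] (hψ : ψ.IsPrimitive)
    (B : V → ℂ) (f : V) :
    𝔼 β, codeFourier ψ B β * dotChar ψ β f = B f / Fintype.card V := by
  classical
  have hsymm : ∀ g : V, ∀ β, B g * starRingEnd ℂ (dotChar ψ β g) * dotChar ψ β f =
      B g * dotChar ψ (f - g : ι → R) β := fun g β => by
    rw [dotChar_comm ψ β, dotChar_comm ψ β f, dotChar_conj, mul_assoc, ← dotChar_add_left,
      neg_add_eq_sub]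
  simp only [codeFourier, expect_mul, hsymm]
  rw [expect_comm]
  simp only [← mul_expect, expect_dotChar hψ, sub_eq_zero, ← Subtype.ext_iff, mul_ite, mul_one,
    mul_zero, Fintype.expect_eq_sum_div_card, sum_ite_eq, mem_univ, if_true]

variable [DecidableEq R]

theorem expect_submodule_eq_expect [Fintype R] [DecidableEq ι] (hψ : ψ.IsPrimitive)
    (hV : ∀ γ ∈ dualCode V, hammingNorm γ ≤ t → γ = 0) (hF : F ∈ fourierDegreeLE ψ t) :
    𝔼 f : V, F f = 𝔼 f, F f := by
  classical
  induction hF using fourierDegreeLE_induction with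
  | dotChar γ hγ =>
    rw [expect_dotChar_submodule hψ, expect_dotChar hψ]
    exact if_congr ⟨fun h => hV γ h hγ, fun h => h ▸ zero_mem _⟩ rfl rfl
  | zero => simp only [Pi.zero_apply, expect_const_zero]
  | add F G _ _ hF hG => simp only [Pi.add_apply, expect_add_distrib, hF, hG]
  | smul c F _ hF => simp only [Pi.smul_apply, smul_eq_mul, ← mul_expect, hF]

theorem expect_submodule_norm_pow_eq_expect [Fintype R] [DecidableEq ι] (hψ : ψ.IsPrimitive) (k : ℕ)
    (hV : ∀ γ ∈ dualCode V, hammingNorm γ ≤ 2 * k * t → γ = 0) (hF : F ∈ fourierDegreeLE ψ t) :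
    𝔼 f : V, ‖F f‖ ^ (2 * k) = 𝔼 f, ‖F f‖ ^ (2 * k) := by
  refine Complex.ofReal_injective ?_
  push_cast
  exact expect_submodule_eq_expect hψ hV (norm_pow_mem_fourierDegreeLE hF k)

theorem expect_submodule_norm_pow_four_le [Fintype R] [Nontrivial R] (hψ : ψ.IsPrimitive)
    (hV : ∀ γ ∈ dualCode V, hammingNorm γ ≤ 4 * t → γ = 0) (hF : F ∈ fourierDegreeLE ψ t) :
    𝔼 f : V, ‖F f‖ ^ 4 ≤ (((Fintype.card R : ℝ) ^ 2) ^ t * 𝔼 f : V, ‖F f‖ ^ 2) ^ 2 := by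
  classical
  rw [expect_submodule_norm_pow_eq_expect hψ 2 hV hF,
    expect_submodule_norm_pow_eq_expect hψ 1 (fun γ h hγ => hV γ h (by omega)) hF]
  exact expect_norm_pow_four_le_of_mem_fourierDegreeLE hψ hF

theorem exists_mem_fourierDegreeLE_eq [Finite R] (hψ : ψ.IsPrimitive) {B : V → ℂ}
    (hB : ∀ β, codeFourier ψ B β ≠ 0 → ∃ γ, hammingNorm γ ≤ t ∧ β - γ ∈ dualCode V) :
    ∃ F ∈ fourierDegreeLE ψ t, ∀ f : V, F (f : ι → R) = B f := by
  classical
  cases nonempty_fintype R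
  let restrict : ((ι → R) → ℂ) →ₗ[ℂ] V → ℂ := LinearMap.funLeft ℂ ℂ Subtype.val
  have hchar : ∀ β, codeFourier ψ B β • restrict (dotChar ψ β) ∈
      (fourierDegreeLE ψ t).map restrict := fun β => by
    obtain h0 | h0 := eq_or_ne (codeFourier ψ B β) 0
    · rw [h0, zero_smul]
      exact Submodule.zero_mem _
    · obtain ⟨γ, hγ, hβγ⟩ := hB β h0
      have hres : restrict (dotChar ψ β) = restrict (dotChar ψ γ) :=
        funext fun f => dotChar_congr hβγ f.2
      rw [hres]
      exact Submodule.smul_mem _ _ (Submodule.mem_map_of_mem (dotChar_mem_fourierDegreeLE hγ))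
  have hinv : B = (Fintype.card V / Fintype.card (ι → R) : ℂ) •
      ∑ β, codeFourier ψ B β • restrict (dotChar ψ β) := by
    funext f
    have := expect_codeFourier_mul_dotChar hψ B f
    have hV : (Fintype.card V : ℂ) ≠ 0 := Nat.cast_ne_zero.2 Fintype.card_ne_zero
    rw [Fintype.expect_eq_sum_div_card, eq_div_iff hV] at this
    rw [← this, div_mul_comm, Pi.smul_apply, Finset.sum_apply, smul_eq_mul]
    rfl
  obtain ⟨F, hF, hFB⟩ : B ∈ (fourierDegreeLE ψ t).map restrict :=
    hinv ▸ Submodule.smul_mem _ _ (Submodule.sum_mem _ fun β _ => hchar β)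
  exact ⟨F, hF, congrFun hFB⟩

end Code

section ReedMuller

open Finset MvPolynomial

variable {F σ : Type*} [Field F] [Fintype F]

theorem card_mul_card_dotProduct_eq_zero [DecidableEq F] [Fintype σ] [DecidableEq σ]
    {v : σ → F} (hv : v ≠ 0) :
    Fintype.card F * #{l : σ → F | l ⬝ᵥ v = 0} = Fintype.card (σ → F) := by
  let φ : (σ → F) →+ F := (dotProductBilin F F).flip v |>.toAddMonoidHom
  obtain ⟨i, hi⟩ := Function.ne_iff.1 hv
  have hφ : φ.range = ⊤ := AddMonoidHom.range_eq_top.2 fun a =>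
    ⟨Pi.single i (a / v i), (single_dotProduct _ _ _).trans (div_mul_cancel₀ a hi)⟩
  have hker : Nat.card φ.ker = #{l : σ → F | l ⬝ᵥ v = 0} :=
    Nat.subtype_card _ fun l => by rw [mem_filter_univ, AddMonoidHom.mem_ker]; rfl
  rw [← hker, ← Nat.card_eq_fintype_card, ← Nat.card_eq_fintype_card, mul_comm,
    ← φ.ker.card_mul_index, AddSubgroup.index_ker, hφ, AddSubgroup.card_top]

theorem exists_card_mul_card_dotProduct_sub_eq_zero_le [DecidableEq F] [Fintype σ]
    {S : Finset (σ → F)} {x : σ → F} (hx : x ∉ S) :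
    ∃ l : σ → F, Fintype.card F * #{y ∈ S | l ⬝ᵥ (y - x) = 0} ≤ #S := by
  classical
  have hsum : ∑ l : σ → F, Fintype.card F * #{y ∈ S | l ⬝ᵥ (y - x) = 0} = ∑ _l : σ → F, #S := by
    calc ∑ l : σ → F, Fintype.card F * #{y ∈ S | l ⬝ᵥ (y - x) = 0}
        = ∑ y ∈ S, Fintype.card F * #{l : σ → F | l ⬝ᵥ (y - x) = 0} := by
          simp only [← mul_sum, card_filter]
          rw [sum_comm]
      _ = ∑ _y ∈ S, Fintype.card (σ → F) := sum_congr rfl fun y hy =>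
          card_mul_card_dotProduct_eq_zero (sub_ne_zero.2 (ne_of_mem_of_not_mem hy hx))
      _ = ∑ _l : σ → F, #S := by simp only [sum_const, smul_eq_mul, card_univ, mul_comm]
  obtain ⟨l, -, hl⟩ := exists_le_of_sum_le univ_nonempty hsum.le
  exact ⟨l, hl⟩

/-- The Reed–Muller code of order `d`: the functions `F^σ → F` given by the polynomials of total
degree at most `d`. -/
noncomputable def reedMuller (F σ : Type*) [CommRing F] (d : ℕ) : Submodule F ((σ → F) → F) :=
  (restrictTotalDegree σ F d).map (evalₗ F σ)

theorem mem_reedMuller {F σ : Type*} [CommRing F] {d : ℕ} {f : (σ → F) → F} :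
    f ∈ reedMuller F σ d ↔ ∃ P : MvPolynomial σ F, P.totalDegree ≤ d ∧ ∀ x, f x = eval x P := by
  simp only [reedMuller, Submodule.mem_map, mem_restrictTotalDegree, funext_iff, evalₗ_apply,
    eq_comm]

theorem exists_separating_polynomial [Finite σ] (d : ℕ) {S : Finset (σ → F)} {x : σ → F}
    (hx : x ∉ S) (hS : #S < Fintype.card F ^ d) :
    ∃ Q : MvPolynomial σ F, Q.totalDegree ≤ (Fintype.card F - 1) * d ∧ eval x Q ≠ 0 ∧
      ∀ y ∈ S, eval y Q = 0 := by
  classical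
  cases nonempty_fintype σ
  induction d generalizing S with
  | zero =>
    refine ⟨1, by simp, by simp, ?_⟩
    rw [card_eq_zero.1 (Nat.lt_one_iff.1 hS)]
    simp
  | succ d ih =>
    obtain ⟨l, hl⟩ := exists_card_mul_card_dotProduct_sub_eq_zero_le hx
    obtain ⟨Q, hdeg, hQx, hQ⟩ := ih (S := {y ∈ S | l ⬝ᵥ (y - x) = 0}) (by simp [hx])
      (Nat.lt_of_mul_lt_mul_left (a := Fintype.card F) (by
        rw [← pow_succ']; exact hl.trans_lt hS))
    let L : MvPolynomial σ F := ∑ i, C (l i) * (X i - C (x i))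
    have hL : ∀ y, eval y L = l ⬝ᵥ (y - x) := fun y => by simp [L, dotProduct]
    have hLdeg : L.totalDegree ≤ 1 := by
      refine totalDegree_finsetSum_le fun i _ => (totalDegree_mul _ _).trans ?_
      rw [totalDegree_C, zero_add]
      exact (totalDegree_sub_C_le _ _).trans (totalDegree_X i).le
    refine ⟨Q * (1 - L ^ (Fintype.card F - 1)), ?_, ?_, fun y hy => ?_⟩
    · calc (Q * (1 - L ^ (Fintype.card F - 1))).totalDegree
          ≤ Q.totalDegree + (L ^ (Fintype.card F - 1)).totalDegree :=
            (totalDegree_mul _ _).trans (Nat.add_le_add_left ((totalDegree_sub _ _).trans_eq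
              (by rw [totalDegree_one, Nat.zero_max])) _)
        _ ≤ (Fintype.card F - 1) * d + (Fintype.card F - 1) * 1 :=
            add_le_add hdeg ((totalDegree_pow _ _).trans (Nat.mul_le_mul_left _ hLdeg))
        _ = (Fintype.card F - 1) * (d + 1) := (mul_add _ _ _).symm
    · rwa [map_mul, map_sub, map_pow, hL, sub_self, dotProduct_zero, map_one,
        zero_pow (Nat.sub_ne_zero_of_lt Fintype.one_lt_card), sub_zero, mul_one]
    · rw [map_mul]
      by_cases h : l ⬝ᵥ (y - x) = 0
      · rw [hQ y (mem_filter.2 ⟨hy, h⟩), zero_mul]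
      · rw [map_sub, map_pow, hL, FiniteField.pow_card_sub_one_eq_one _ h, map_one, sub_self,
          mul_zero]

theorem eq_zero_of_mem_dualCode_reedMuller [DecidableEq F] [Fintype σ] [DecidableEq σ]
    {d : ℕ} {γ : (σ → F) → F} (hγ : γ ∈ dualCode (reedMuller F σ ((Fintype.card F - 1) * d)))
    (h : hammingNorm γ ≤ Fintype.card F ^ d) : γ = 0 := by
  by_contra hne
  obtain ⟨x, hx⟩ := Function.ne_iff.1 hne
  have hmem : x ∈ ({y | γ y ≠ 0} : Finset (σ → F)) := by simpa using hx
  obtain ⟨Q, hdeg, hQx, hQ⟩ := exists_separating_polynomial d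
    (notMem_erase x {y | γ y ≠ 0}) ((card_erase_lt_of_mem hmem).trans_le h)
  have horth : γ ⬝ᵥ (fun y => eval y Q) = γ x * eval x Q :=
    Fintype.sum_eq_single x fun y hy => by
      by_cases hy0 : γ y = 0
      · rw [hy0, zero_mul]
      · have hyQ := hQ y (mem_erase.2 ⟨hy, (mem_filter_univ y).2 hy0⟩)
        exact mul_eq_zero_of_right _ hyQ
  exact mul_ne_zero hx hQx (horth.symm.trans (hγ _ (mem_reedMuller.2 ⟨Q, hdeg, fun _ => rfl⟩)))

theorem exists_reduced_exponent (F : Type*) [Field F] [Fintype F] (n : ℕ) :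
    ∃ k ≤ n, k ≤ Fintype.card F - 1 ∧ ∀ a : F, a ^ k = a ^ n := by
  induction n using Nat.strong_induction_on with
  | _ n ih =>
    obtain hn | hn := Nat.lt_or_ge n (Fintype.card F)
    · exact ⟨n, le_rfl, Nat.le_sub_one_of_lt hn, fun _ => rfl⟩
    · obtain ⟨m, rfl⟩ := Nat.exists_eq_add_of_le hn
      have hlt : 1 + m < Fintype.card F + m := Nat.add_lt_add_right Fintype.one_lt_card m
      obtain ⟨k, hk, hkq, hpow⟩ := ih (1 + m) hlt
      exact ⟨k, hk.trans hlt.le, hkq, fun a => by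
        rw [hpow, pow_add, pow_add, pow_one, FiniteField.pow_card]⟩

theorem exists_reduced_polynomial (P : MvPolynomial σ F) :
    ∃ Q : MvPolynomial σ F, Q.totalDegree ≤ P.totalDegree ∧
      (∀ i, Q.degreeOf i ≤ Fintype.card F - 1) ∧ ∀ x, eval x Q = eval x P := by
  choose red hred_le hred hpow using exists_reduced_exponent F
  have hred0 : red 0 = 0 := Nat.le_zero.1 (hred_le 0)
  refine ⟨∑ m ∈ P.support, monomial (m.mapRange red hred0) (P.coeff m), ?_, fun i => ?_,
    fun x => ?_⟩
  · refine totalDegree_finsetSum_le fun m hm => (totalDegree_monomial_le _ _).trans ?_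
    refine le_trans ?_ (le_totalDegree hm)
    rw [Finsupp.sum_mapRange_index fun _ => rfl]
    exact sum_le_sum fun i _ => hred_le (m i)
  · refine (degreeOf_sum_le i _ _).trans (Finset.sup_le fun m hm => ?_)
    rw [degreeOf_monomial_eq _ _ (mem_support_iff.1 hm), Finsupp.mapRange_apply]
    exact hred (m i)
  · conv_rhs => rw [← support_sum_monomial_coeff P]
    rw [map_sum, map_sum]
    refine sum_congr rfl fun m _ => ?_
    rw [eval_monomial, eval_monomial, Finsupp.prod_mapRange_index fun _ => pow_zero _]
    simp only [hpow]

end ReedMuller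
section HypercontractivityOverReedMuller

open Finset

theorem rpow_one_div_four_le_of_le_sq {a b c : ℝ} (ha : 0 ≤ a) (hb : 0 ≤ b) (hc : 0 ≤ c)
    (h : a ≤ (c ^ 2 * b) ^ 2) : a ^ (1 / 4 : ℝ) ≤ c * b ^ (1 / 2 : ℝ) := by
  have hroot : (c * b ^ (1 / 2 : ℝ)) ^ 4 = (c ^ 2 * b) ^ 2 := by
    rw [← Real.sqrt_eq_rpow, mul_pow, mul_pow, ← pow_mul, show 4 = 2 * 2 from rfl,
      pow_mul √b, Real.sq_sqrt hb]
  calc a ^ (1 / 4 : ℝ) ≤ ((c * b ^ (1 / 2 : ℝ)) ^ 4) ^ ((4 : ℕ) : ℝ)⁻¹ := by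
        rw [hroot, Nat.cast_ofNat, one_div]
        gcongr
    _ = c * b ^ (1 / 2 : ℝ) := Real.pow_rpow_inv_natCast (by positivity) four_ne_zero

theorem stmt13_general {F σ : Type*} [Field F] [Fintype F] [DecidableEq F] [Fintype σ]
    [DecidableEq σ] {ψ : AddChar F ℂ} (hψ : ψ.IsPrimitive) {d t : ℕ}
    (ht : 4 * t ≤ Fintype.card F ^ d)
    [Fintype (reedMuller F σ ((Fintype.card F - 1) * d))]
    {A : reedMuller F σ ((Fintype.card F - 1) * d) → ℂ}
    (hA : ∀ β, codeFourier ψ A β ≠ 0 →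
      ∃ γ, hammingNorm γ ≤ t ∧ β - γ ∈ dualCode (reedMuller F σ ((Fintype.card F - 1) * d))) :
    (𝔼 f, ‖A f‖ ^ (4 : ℝ)) ^ (1 / 4 : ℝ) ≤
      (Fintype.card F : ℝ) ^ t * (𝔼 f, ‖A f‖ ^ (2 : ℝ)) ^ (1 / 2 : ℝ) := by
  obtain ⟨G, hG, hGA⟩ := exists_mem_fourierDegreeLE_eq hψ hA
  have hmoments := expect_submodule_norm_pow_four_le hψ
    (fun γ hγ h => eq_zero_of_mem_dualCode_reedMuller hγ (h.trans ht)) hG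
  simp only [hGA, pow_right_comm _ 2 t] at hmoments
  simp only [Real.rpow_ofNat]
  exact rpow_one_div_four_le_of_le_sq (expect_nonneg fun _ _ => by positivity)
    (expect_nonneg fun _ _ => by positivity) (by positivity) hmoments

end HypercontractivityOverReedMuller

section TernaryReedMuller

open Finset

variable {r d : ℕ}

theorem ω_eq_stdAddChar_one : ω = ZMod.stdAddChar (1 : F3) := by
  rw [ω, ← Int.cast_one, ZMod.stdAddChar_coe]
  norm_num

theorem chi_eq_dotChar (β f : Fn r) : chi β f = dotChar ZMod.stdAddChar β f := by
  rw [chi, ω_eq_stdAddChar_one, ← AddChar.map_nsmul_eq_pow, nsmul_one, ZMod.natCast_zmod_val]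
  rfl

theorem mem_polySet_iff_mem_reedMuller {f : Fn r} :
    f ∈ PolySet r d ↔ f ∈ reedMuller F3 (Fin r) d := by
  rw [mem_reedMuller]
  refine ⟨fun ⟨P, hP, _, hf⟩ => ⟨P, hP, hf⟩, fun ⟨P, hP, hf⟩ => ?_⟩
  obtain ⟨Q, hdeg, hind, hQ⟩ := exists_reduced_polynomial P
  exact ⟨Q, hdeg.trans hP, hind, fun x => (hf x).trans (hQ x).symm⟩

theorem mem_dualSet_iff_mem_dualCode {γ : Fn r} :
    γ ∈ dualSet r (PolySet r d) ↔ γ ∈ dualCode (reedMuller F3 (Fin r) d) :=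
  forall_congr' fun _ => imp_congr_left mem_polySet_iff_mem_reedMuller

variable [Fintype (reedMuller F3 (Fin r) d)]

theorem sum_polyFinset_div_card_eq_expect {𝕜 : Type*} [Field 𝕜] [CharZero 𝕜] (g : Fn r → 𝕜) :
    (∑ f ∈ polyFinset r d, g f) / #(polyFinset r d) = 𝔼 f : reedMuller F3 (Fin r) d, g f := by
  have hmem : ∀ f, f ∈ polyFinset r d ↔ f ∈ reedMuller F3 (Fin r) d := fun f => by
    rw [polyFinset, Set.Finite.mem_toFinset, mem_polySet_iff_mem_reedMuller]
  rw [Fintype.expect_eq_sum_div_card, sum_subtype _ hmem, Fintype.card_of_subtype _ hmem]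

theorem fourierP_eq_codeFourier (A : Fn r → ℂ) (β : Fn r) :
    fourierP r d A β =
      codeFourier ZMod.stdAddChar (fun f : reedMuller F3 (Fin r) d => A f) β := by
  simp only [fourierP, sum_polyFinset_div_card_eq_expect, chi_eq_dotChar, codeFourier]

theorem normqP_eq_expect_rpow (q : ℝ) (A : Fn r → ℂ) :
    normqP r d q A = (𝔼 f : reedMuller F3 (Fin r) d, ‖A f‖ ^ q) ^ (1 / q) := by
  rw [normqP, sum_polyFinset_div_card_eq_expect]

theorem IsMinRepSet.exists_hammingNorm_le {Λ : Finset (Fn r)} (hΛ : IsMinRepSet r d Λ) {t : ℕ}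
    {A : Fn r → ℂ} (hA : ∀ α ∈ Λ, t < supp α → fourierP r d A α = 0) (β : Fn r)
    (hβ : codeFourier ZMod.stdAddChar (fun f : reedMuller F3 (Fin r) d => A f) β ≠ 0) :
    ∃ γ, hammingNorm γ ≤ t ∧ β - γ ∈ dualCode (reedMuller F3 (Fin r) d) := by
  obtain ⟨γ, ⟨hγΛ, hdual⟩, -⟩ := hΛ.1 β
  rw [mem_dualSet_iff_mem_dualCode] at hdual
  refine ⟨γ, not_lt.1 fun hγ => hβ ?_, hdual⟩
  rw [codeFourier_congr hdual, ← fourierP_eq_codeFourier, hA γ hγΛ hγ]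

theorem four_mul_le_three_pow_of_le_rpow_sub_one {d t : ℕ}
    (h : (4 * t : ℝ) ≤ (3 : ℝ) ^ ((d : ℝ) - 1)) : 4 * t ≤ 3 ^ d := by
  have hle : (3 : ℝ) ^ ((d : ℝ) - 1) ≤ 3 ^ (d : ℝ) :=
    Real.rpow_le_rpow_of_exponent_le (by norm_num) (sub_le_self _ zero_le_one)
  rw [Real.rpow_natCast] at hle
  exact_mod_cast h.trans hle

end TernaryReedMuller

/-- Hypercontractivity over `P_{r,2d}` (Lemma 3.4): there is a universal `C > 0` such that
for `4t ≤ 3^{d−1}` and any function on `P_{r,2d}` with Fourier support (w.r.t. any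
minimal-support representatives `Λ`) on levels at most `t`, `‖A‖₄ ≤ C^t ‖A‖₂`. -/
theorem stmt13 :
    ∃ C : ℝ, 0 < C ∧
      ∀ r d t : ℕ, (4 * t : ℝ) ≤ (3 : ℝ) ^ ((d : ℝ) - 1) →
        ∀ Λ : Finset (Fn r), IsMinRepSet r (2 * d) Λ →
          ∀ A : Fn r → ℂ,
            (∀ α ∈ Λ, t < supp α → fourierP r (2 * d) A α = 0) →
            normqP r (2 * d) 4 A ≤ C ^ t * normqP r (2 * d) 2 A :=
  ⟨3, three_pos, fun r d t ht Λ hΛ A hA => by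
    have horder : 2 * d = (Fintype.card F3 - 1) * d := rfl
    rw [horder] at hΛ hA ⊢
    let _ := Fintype.ofFinite (reedMuller F3 (Fin r) ((Fintype.card F3 - 1) * d))
    rw [normqP_eq_expect_rpow, normqP_eq_expect_rpow]
    exact stmt13_general (F := F3) (ZMod.isPrimitive_stdAddChar 3)
      (four_mul_le_three_pow_of_le_rpow_sub_one ht) (hΛ.exists_hammingNorm_le hA)⟩
end

section
/- For all r, d ∈ ℕ and every α : F₃^r → F₃ with |α| ≤ 3^{d/2}: E_{p,a}[χ_α(a(p²+1))] = Re[((ω² − 1)/3)^{n₁}·((ω − 1)/3)^{n₂}], where p is uniform on P_{r,d}, a is uniform on {1,2}, p² is the pointwise square, and n_c := #{x ∈ F₃^r : α(x) = c} for c ∈ {1,2}. Consequently, |E_{p,a}[χ_α(a(p²+1))]| ≤ 3^{−|α|/2}. -/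
open scoped BigOperators

/-!
Since `2 = -1` in `F₃`, averaging over `a` takes the real part of the average over `p`, and
`χ_α(p² + 1)` is the product over the support of `α` of functions of the single values `p x`.
The point is that on a set `S` with `|S|² ≤ 3^d` the values of a uniform `p ∈ P_{r,d}` are
independent and uniform: every function on `S` is the restriction of an element of `P_{r,d}`, and
`P_{r,d}` is invariant under translation by that element. Hence the average is a product of
one-point averages, each of absolute value `3^{-1/2}` on the support.

For the interpolation, divide an arbitrary interpolating polynomial by the vanishing ideal of `S`.
An exponent `c` that is standard for this ideal has only standard divisors, and these are linearly
independent as functions on `S`, so `∏ (c i + 1) ≤ |S|`. Over a field with `q` elements `c i < q`,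
and Bernoulli's inequality gives `q ^ (c i) ≤ (c i + 1) ^ (q - 1)`; hence
`q ^ (∑ c i) ≤ |S| ^ (q - 1)`.
-/

section StandardMonomials

open MvPolynomial
open scoped MonomialOrder

variable {σ K : Type*} [Field K]

/-- The standard monomials of an ideal `I` with respect to a monomial order: the exponents that are
not divisible by the leading exponent of any nonzero element of `I`. -/
def standardMonomials (m : MonomialOrder σ) (I : Ideal (MvPolynomial σ K)) : Set (σ →₀ ℕ) :=
  {c | ∀ p ∈ I, p ≠ 0 → ¬ m.degree p ≤ c}

variable {m : MonomialOrder σ}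

lemma exists_sub_mem_support_subset_standardMonomials (I : Ideal (MvPolynomial σ K))
    (f : MvPolynomial σ K) : ∃ g, f - g ∈ I ∧ ↑g.support ⊆ standardMonomials m I := by
  obtain ⟨q, g, hfg, -, hg⟩ := m.div_set (B := {p | p ∈ I ∧ p ≠ 0})
    (fun p hp ↦ (m.leadingCoeff_ne_zero_iff.2 hp.2).isUnit) f
  refine ⟨g, ?_, fun c hc p hpI hp ↦ hg c hc p ⟨hpI, hp⟩⟩
  rw [hfg, add_sub_cancel_right, Finsupp.linearCombination_apply]
  exact Submodule.sum_mem _ fun p _ ↦ I.mul_mem_left _ p.2.1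

lemma exists_ne_zero_support_subset_of_card_lt {S : Finset (σ → K)} {T : Finset (σ →₀ ℕ)}
    (h : S.card < T.card) :
    ∃ p : MvPolynomial σ K, p ≠ 0 ∧ p.support ⊆ T ∧ ∀ x ∈ S, eval x p = 0 := by
  let evalOn : restrictSupport K (T : Set (σ →₀ ℕ)) →ₗ[K] S → K :=
    LinearMap.pi (fun x : S ↦ (aeval x.1).toLinearMap) ∘ₗ Submodule.subtype _
  have b := basisRestrictSupport K (T : Set (σ →₀ ℕ))
  have := b.finiteDimensional_of_finite
  have hker : LinearMap.ker evalOn ≠ ⊥ := LinearMap.ker_ne_bot_of_finrank_lt <| by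
    simpa [Module.finrank_eq_card_basis b] using h
  obtain ⟨p, hp, hp0⟩ := Submodule.exists_mem_ne_zero_of_ne_bot hker
  refine ⟨p, by simpa using hp0, by exact_mod_cast (mem_restrictSupport_iff K).1 p.2, fun x hx ↦ ?_⟩
  simpa [evalOn, aeval_eq_eval] using congrFun hp ⟨x, hx⟩

lemma card_Iic_le_of_mem_standardMonomials [DecidableEq σ] {S : Finset (σ → K)} {c : σ →₀ ℕ}
    (hc : c ∈ standardMonomials m (vanishingIdeal K (S : Set (σ → K)))) :
    (Finset.Iic c).card ≤ S.card := by
  by_contra! hlt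
  obtain ⟨p, hp0, hpc, hpS⟩ := exists_ne_zero_support_subset_of_card_lt hlt
  exact hc p hpS hp0 (Finset.mem_Iic.1 (hpc (m.degree_mem_support hp0)))

lemma apply_lt_card_of_mem_standardMonomials [Fintype K] {S : Set (σ → K)} {c : σ →₀ ℕ}
    (hc : c ∈ standardMonomials m (vanishingIdeal K S)) (i : σ) : c i < Fintype.card K := by
  classical
  by_contra! hle
  have hpow : m.degree (X i ^ Fintype.card K : MvPolynomial σ K) =
      Finsupp.single i (Fintype.card K) := by
    rw [X_pow_eq_monomial, m.degree_monomial, if_neg one_ne_zero]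
  have hlead : m.degree (X i : MvPolynomial σ K) ≺[m]
      m.degree (X i ^ Fintype.card K : MvPolynomial σ K) := by
    rw [hpow, m.degree_X]
    exact m.toSyn_strictMono <| (Finsupp.single_mono.strictMono_of_injective
      (Finsupp.single_injective i)) Fintype.one_lt_card
  have hdeg : m.degree (X i ^ Fintype.card K - X i : MvPolynomial σ K) =
      Finsupp.single i (Fintype.card K) := by
    rw [m.degree_sub_of_lt hlead, hpow]
  refine hc (X i ^ Fintype.card K - X i) (fun x _ ↦ ?_) ?_ ?_
  · simp [FiniteField.pow_card]
  · exact m.ne_zero_of_degree_ne_zero (hdeg ▸ Finsupp.single_ne_zero.2 Fintype.card_ne_zero)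
  · rwa [hdeg, Finsupp.single_le_iff]

end StandardMonomials

lemma succ_pow_le_succ_pow {n k : ℕ} (h : n ≤ k) : (k + 1) ^ n ≤ (n + 1) ^ k := by
  rcases n.eq_zero_or_pos with rfl | hn
  · simp
  have hn' : (0 : ℝ) < n := by exact_mod_cast hn
  have bernoulli : (k + 1 : ℝ) ≤ (n + 1) ^ (k / n : ℝ) := by
    have := one_add_mul_self_le_rpow_one_add (s := n) (by linarith) (p := k / n)
      ((one_le_div hn').2 (by exact_mod_cast h))
    rwa [div_mul_cancel₀ _ hn'.ne', add_comm 1, add_comm 1] at this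
  have : (k + 1 : ℝ) ^ n ≤ (n + 1) ^ k := calc
    (k + 1 : ℝ) ^ n ≤ ((n + 1) ^ (k / n : ℝ)) ^ n := by gcongr
    _ = (n + 1) ^ k := by
      rw [← Real.rpow_mul_natCast (by positivity), div_mul_cancel₀ _ hn'.ne', Real.rpow_natCast]
  exact_mod_cast this

lemma sq_le_pow_of_le_rpow_half {b n d : ℕ} (h : (n : ℝ) ≤ (b : ℝ) ^ ((d : ℝ) / 2)) :
    n ^ 2 ≤ b ^ d := by
  have : (n : ℝ) ^ 2 ≤ (b : ℝ) ^ d := calc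
    (n : ℝ) ^ 2 ≤ ((b : ℝ) ^ ((d : ℝ) / 2)) ^ 2 := by gcongr
    _ = (b : ℝ) ^ d := by
      rw [← Real.rpow_mul_natCast b.cast_nonneg, Nat.cast_ofNat, div_mul_cancel₀ _ two_ne_zero,
        Real.rpow_natCast]
  exact_mod_cast this

lemma pow_degree_le_card_Iic_pow {σ : Type*} [DecidableEq σ] {q : ℕ} {c : σ →₀ ℕ}
    (hc : ∀ i, c i < q) : q ^ c.degree ≤ (Finset.Iic c).card ^ (q - 1) := by
  rw [Finsupp.card_Iic, Finsupp.degree_apply, ← Finset.prod_pow_eq_pow_sum, ← Finset.prod_pow]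
  refine Finset.prod_le_prod' fun i _ ↦ ?_
  obtain ⟨k, rfl⟩ : ∃ k, q = k + 1 := Nat.exists_eq_add_one.2 (by have := hc i; omega)
  simpa using succ_pow_le_succ_pow (Nat.lt_succ_iff.1 (hc i))

open MvPolynomial in
theorem exists_mvPolynomial_eqOn {σ K : Type*} [Finite σ] [Field K] [Fintype K]
    {S : Finset (σ → K)} {d : ℕ} (hS : S.card ^ (Fintype.card K - 1) ≤ Fintype.card K ^ d)
    (f : (σ → K) → K) :
    ∃ P : MvPolynomial σ K, P.totalDegree ≤ d ∧ (∀ i, P.degreeOf i ≤ Fintype.card K - 1) ∧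
      Set.EqOn (fun x ↦ eval x P) f S := by
  let _ : LinearOrder σ := IsWellOrder.linearOrder WellOrderingRel
  obtain ⟨F, -, hF⟩ : f ∈ (restrictDegree σ K (Fintype.card K - 1)).map (evalₗ K σ) :=
    map_restrict_dom_evalₗ K σ ▸ Submodule.mem_top
  obtain ⟨P, hFP, hP⟩ := exists_sub_mem_support_subset_standardMonomials
    (m := MonomialOrder.lex) (vanishingIdeal K (S : Set (σ → K))) F
  have hlt : ∀ c ∈ P.support, ∀ i, c i < Fintype.card K := fun c hc ↦
    apply_lt_card_of_mem_standardMonomials (hP hc)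
  refine ⟨P, Finset.sup_le fun c hc ↦ ?_, fun i ↦ ?_, fun x hx ↦ ?_⟩
  · have : Fintype.card K ^ c.degree ≤ Fintype.card K ^ d := calc
      _ ≤ (Finset.Iic c).card ^ (Fintype.card K - 1) := pow_degree_le_card_Iic_pow (hlt c hc)
      _ ≤ S.card ^ (Fintype.card K - 1) := by
        gcongr; exact card_Iic_le_of_mem_standardMonomials (hP hc)
      _ ≤ _ := hS
    exact (Nat.pow_le_pow_iff_right Fintype.one_lt_card).1 this
  · exact degreeOf_le_iff.2 fun c hc ↦ Nat.le_sub_one_of_lt (hlt c hc i)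
  · have hFPx : eval x F - eval x P = 0 := by simpa [aeval_eq_eval] using hFP x hx
    exact (sub_eq_zero.1 hFPx).symm.trans (congrFun hF x)

@[to_additive]
lemma prod_univ_zmod_three {M : Type*} [CommMonoid M] (f : ZMod 3 → M) :
    ∏ c, f c = f 0 * f 1 * f 2 :=
  Fin.prod_univ_three f

lemma addChar_sum_eq_prod {ι A M : Type*} [AddCommMonoid A] [CommMonoid M] (ψ : AddChar A M)
    (s : Finset ι) (f : ι → A) : ψ (∑ i ∈ s, f i) = ∏ i ∈ s, ψ (f i) :=
  (congrArg ψ.toMonoidHom (ofAdd_sum s f)).trans (map_prod ψ.toMonoidHom _ s)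

lemma expect_pi_prod {ι κ 𝕜 : Type*} [Fintype ι] [DecidableEq ι] [Fintype κ] [Field 𝕜] [CharZero 𝕜]
    (g : ι → κ → 𝕜) :
    𝔼 y : ι → κ, ∏ i, g i (y i) = ∏ i, 𝔼 t, g i t := by
  simp only [Fintype.expect_eq_sum_div_card, Finset.prod_div_distrib, Finset.prod_univ_sum,
    Fintype.piFinset_univ, Finset.prod_const, Finset.card_univ, Fintype.card_fun, Nat.cast_pow]

lemma expect_addSubgroup_eq_expect_of_dependsOn {X G M : Type*} [AddCommGroup G]
    [AddCommMonoid M] [Module ℚ≥0 M] [Fintype (X → G)] {V : AddSubgroup (X → G)} [Fintype V]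
    {S : Set X} (hV : ∀ y : X → G, ∃ p ∈ V, S.EqOn p y) {F : (X → G) → M} (hF : DependsOn F S) :
    𝔼 p : V, F p = 𝔼 y, F y := by
  have translate (y : X → G) : 𝔼 p : V, F p = 𝔼 p : V, F (p + y) := by
    obtain ⟨q, hq, hqy⟩ := hV y
    calc 𝔼 p : V, F p = 𝔼 p : V, F (p + q) :=
          (Fintype.expect_equiv (Equiv.addRight (⟨q, hq⟩ : V)) _ _ fun _ ↦ rfl).symm
      _ = 𝔼 p : V, F (p + y) :=
          Finset.expect_congr rfl fun p _ ↦ hF fun x hx ↦ congrArg (p.1 x + ·) (hqy hx)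
  calc 𝔼 p : V, F p = 𝔼 y : X → G, 𝔼 p : V, F (p + y) := by
        simp only [← translate, Fintype.expect_const]
    _ = 𝔼 p : V, 𝔼 y, F (p + y) := Finset.expect_comm _ _ _
    _ = 𝔼 _p : V, 𝔼 y, F y := Finset.expect_congr rfl fun p _ ↦
        Fintype.expect_equiv (Equiv.addLeft (p : X → G)) _ _ fun _ ↦ rfl
    _ = 𝔼 y, F y := Fintype.expect_const _

section PolySet

variable {r d : ℕ}

/-- The space `P_{r,d}` as an additive subgroup of the functions `F₃^r → F₃`. -/
def polyAddSubgroup (r d : ℕ) : AddSubgroup (Fn r) where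
  carrier := PolySet r d
  zero_mem' := ⟨0, by simp, by simp, by simp⟩
  add_mem' := by
    rintro g h ⟨P, hPd, hPi, hP⟩ ⟨Q, hQd, hQi, hQ⟩
    exact ⟨P + Q, (MvPolynomial.totalDegree_add _ _).trans (max_le hPd hQd),
      fun i ↦ (MvPolynomial.degreeOf_add_le _ _ _).trans (max_le (hPi i) (hQi i)),
      fun x ↦ by simp [hP, hQ]⟩
  neg_mem' := by
    rintro g ⟨P, hPd, hPi, hP⟩
    exact ⟨-P, by simpa using hPd, fun i ↦ by simpa using hPi i, fun x ↦ by simp [hP]⟩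

lemma mem_polyFinset {g : Fn r} : g ∈ polyFinset r d ↔ g ∈ polyAddSubgroup r d :=
  Set.Finite.mem_toFinset _

lemma exists_mem_polyAddSubgroup_eqOn {S : Finset (Pt r)} (hS : S.card ^ 2 ≤ 3 ^ d) (y : Fn r) :
    ∃ p ∈ polyAddSubgroup r d, Set.EqOn p y S := by
  obtain ⟨P, hPd, hPi, hPy⟩ := exists_mvPolynomial_eqOn (K := F3) hS y
  exact ⟨fun x ↦ MvPolynomial.eval x P, ⟨P, hPd, hPi, fun _ ↦ rfl⟩, hPy⟩

lemma expect_polyFinset_eq_expect_of_dependsOn {S : Finset (Pt r)} (hS : S.card ^ 2 ≤ 3 ^ d)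
    {M : Type*} [AddCommMonoid M] [Module ℚ≥0 M] {F : Fn r → M}
    (hF : DependsOn F (S : Set (Pt r))) : 𝔼 p ∈ polyFinset r d, F p = 𝔼 y, F y := by
  have := Fintype.ofFinite (polyAddSubgroup r d)
  rw [← expect_addSubgroup_eq_expect_of_dependsOn (exists_mem_polyAddSubgroup_eqOn hS) hF]
  exact Finset.expect_bij' (fun p hp ↦ ⟨p, mem_polyFinset.1 hp⟩) (fun p _ ↦ p)
    (fun _ _ ↦ Finset.mem_univ _) (fun p _ ↦ mem_polyFinset.2 p.2) (fun _ _ ↦ rfl)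
    (fun _ _ ↦ rfl) (fun _ _ ↦ rfl)

end PolySet

section Noise

open ZMod (stdAddChar)
open ComplexConjugate

lemma omega_pow_val_eq_stdAddChar (c : F3) : ω ^ c.val = stdAddChar c := by
  rw [ZMod.stdAddChar_apply, ZMod.toCircle_apply, ω, ← Complex.exp_nat_mul]
  congr 1
  push_cast
  ring

lemma isPrimitiveRoot_omega : IsPrimitiveRoot ω 3 :=
  Complex.isPrimitiveRoot_exp 3 three_ne_zero

lemma one_add_omega_add_omega_sq : 1 + ω + ω ^ 2 = 0 := by
  simpa [Finset.sum_range_succ] using isPrimitiveRoot_omega.geom_sum_eq_zero (by norm_num)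

lemma norm_omega_sub_one : ‖ω - 1‖ = √3 := by
  have hω : ω = Complex.exp (Complex.I * (2 * Real.pi / 3 : ℝ)) := by
    rw [ω]
    congr 1
    push_cast
    ring
  have half_angle : 2 * Real.pi / 3 / 2 = Real.pi / 3 := by ring
  rw [hω, Complex.norm_exp_I_mul_ofReal_sub_one, half_angle, Real.sin_pi_div_three,
    mul_div_cancel₀ _ two_ne_zero, Real.norm_of_nonneg (Real.sqrt_nonneg 3)]

/-- The average of the character `ω^{c·(t² + 1)}` over `t ∈ F₃`: the factor that a point `x` with
`α x = c` contributes to the eigenvalue. -/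
noncomputable def noiseFactor (c : F3) : ℂ := 𝔼 t : F3, stdAddChar (c * (t ^ 2 + 1))

lemma noiseFactor_eq (c : F3) : noiseFactor c = (stdAddChar c + 2 * stdAddChar (-c)) / 3 := by
  have h (t : F3) (ht : t ≠ 0) : t ^ 2 + 1 = -1 := by revert t; decide
  rw [noiseFactor, Fintype.expect_eq_sum_div_card, ZMod.card]
  congr 1
  rw [sum_univ_zmod_three, h 1 (by decide), h 2 (by decide), zero_pow two_ne_zero, zero_add,
    mul_one, mul_neg_one]
  ring

lemma noiseFactor_zero : noiseFactor 0 = 1 := by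
  norm_num [noiseFactor_eq]

lemma noiseFactor_neg (c : F3) : noiseFactor (-c) = conj (noiseFactor c) := by
  simp only [noiseFactor, neg_mul, AddChar.map_neg_eq_conj]
  exact (map_expect (starRingEnd ℂ) _ _).symm

lemma noiseFactor_one : noiseFactor 1 = (ω ^ 2 - 1) / 3 := by
  rw [noiseFactor_eq, ← omega_pow_val_eq_stdAddChar, ← omega_pow_val_eq_stdAddChar,
    show (1 : F3).val = 1 from rfl, show (-1 : F3).val = 2 from rfl]
  linear_combination one_add_omega_add_omega_sq / 3

lemma noiseFactor_two : noiseFactor 2 = (ω - 1) / 3 := by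
  rw [noiseFactor_eq, ← omega_pow_val_eq_stdAddChar, ← omega_pow_val_eq_stdAddChar,
    show (2 : F3).val = 2 from rfl, show (-2 : F3).val = 1 from rfl]
  linear_combination one_add_omega_add_omega_sq / 3

lemma norm_noiseFactor {c : F3} (hc : c ≠ 0) : ‖noiseFactor c‖ = (3 : ℝ) ^ (-(1 : ℝ) / 2) := by
  have norm_two : ‖noiseFactor 2‖ = (3 : ℝ) ^ (-(1 : ℝ) / 2) := by
    rw [noiseFactor_two, norm_div, norm_omega_sub_one, Complex.norm_ofNat, Real.sqrt_eq_rpow,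
      ← Real.rpow_sub_one three_ne_zero]
    norm_num
  obtain rfl | rfl : c = 2 ∨ c = -2 := by revert c; decide
  · exact norm_two
  · rw [noiseFactor_neg, RCLike.norm_conj, norm_two]

variable {r d : ℕ}

lemma prod_noiseFactor (α : Fn r) : ∏ x, noiseFactor (α x) =
    ((ω ^ 2 - 1) / 3) ^ (Finset.univ.filter fun x ↦ α x = 1).card *
      ((ω - 1) / 3) ^ (Finset.univ.filter fun x ↦ α x = 2).card := by
  calc ∏ x, noiseFactor (α x)
      = ∏ c : F3, noiseFactor c ^ (Finset.univ.filter fun x ↦ α x = c).card := by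
        simp only [← Finset.prod_const, Finset.prod_fiberwise']
    _ = noiseFactor 0 ^ _ * noiseFactor 1 ^ _ * noiseFactor 2 ^ _ := prod_univ_zmod_three _
    _ = _ := by rw [noiseFactor_zero, noiseFactor_one, noiseFactor_two, one_pow, one_mul]

lemma norm_prod_noiseFactor (α : Fn r) :
    ‖∏ x, noiseFactor (α x)‖ = (3 : ℝ) ^ (-(supp α : ℝ) / 2) := by
  calc ‖∏ x, noiseFactor (α x)‖
      = ∏ x with α x ≠ 0, ‖noiseFactor (α x)‖ := by
        rw [norm_prod, Finset.prod_filter_of_ne]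
        intro x _ hx h0
        simp [h0, noiseFactor_zero] at hx
    _ = ((3 : ℝ) ^ (-(1 : ℝ) / 2)) ^ supp α :=
        Finset.prod_eq_pow_card fun x hx ↦ norm_noiseFactor (Finset.mem_filter.1 hx).2
    _ = (3 : ℝ) ^ (-(supp α : ℝ) / 2) := by
        rw [← Real.rpow_mul_natCast zero_le_three]
        ring_nf

lemma chi_shift (α p : Fn r) (a : F3) :
    chi α (shift p a) = ∏ x, stdAddChar (a * α x * (p x ^ 2 + 1)) := by
  rw [chi, omega_pow_val_eq_stdAddChar, dotF, addChar_sum_eq_prod]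
  refine Finset.prod_congr rfl fun x _ ↦ ?_
  rw [shift, mul_left_comm, mul_assoc]

lemma expect_chi_shift {α : Fn r} (hα : supp α ^ 2 ≤ 3 ^ d) (a : F3) :
    𝔼 p ∈ polyFinset r d, chi α (shift p a) = ∏ x, noiseFactor (a * α x) := by
  have hF : DependsOn (fun p ↦ chi α (shift p a)) ↑(Finset.univ.filter fun x ↦ α x ≠ 0) := by
    intro p q hpq
    simp only [chi_shift]
    refine Finset.prod_congr rfl fun x _ ↦ ?_
    by_cases hx : α x = 0
    · simp [hx]
    · rw [hpq x (by simpa using hx)]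
  rw [expect_polyFinset_eq_expect_of_dependsOn hα hF]
  simp only [chi_shift, noiseFactor]
  exact expect_pi_prod fun x t ↦ stdAddChar (a * α x * (t ^ 2 + 1))

lemma expect_expect_chi_shift {α : Fn r} (hα : supp α ^ 2 ≤ 3 ^ d) :
    𝔼 p ∈ polyFinset r d, 𝔼 a ∈ ({1, 2} : Finset F3), chi α (shift p a) =
      ((∏ x, noiseFactor (α x)).re : ℂ) := by
  have two_eq : (2 : F3) = -1 := by decide
  rw [Finset.expect_comm]
  simp only [expect_chi_shift hα]
  rw [Finset.expect_eq_sum_div_card, Finset.sum_pair (by decide), two_eq]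
  simp only [one_mul, neg_mul, noiseFactor_neg, ← map_prod]
  rw [Complex.re_eq_add_conj]
  congr 1

end Noise

/-- Explicit eigenvalue computation: for `|α| ≤ 3^{d/2}`,
`E_{p,a}[χ_α(a(p²+1))] = Re[((ω²−1)/3)^{n₁}·((ω−1)/3)^{n₂}]`, where
`n_c = #{x : α(x) = c}`; consequently its absolute value is at most `3^{−|α|/2}`. -/
theorem stmt16 (r d : ℕ) (α : Fn r) (hα : (supp α : ℝ) ≤ (3 : ℝ) ^ ((d : ℝ) / 2)) :
    (∑ p ∈ polyFinset r d, ∑ a ∈ ({1, 2} : Finset F3), chi α (shift p a)) /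
        (((polyFinset r d).card : ℂ) * 2)
      = (((((ω ^ 2 - 1) / 3) ^ (Finset.univ.filter fun x => α x = 1).card *
            ((ω - 1) / 3) ^ (Finset.univ.filter fun x => α x = 2).card).re : ℝ) : ℂ) ∧
    ‖(∑ p ∈ polyFinset r d, ∑ a ∈ ({1, 2} : Finset F3), chi α (shift p a)) /
        (((polyFinset r d).card : ℂ) * 2)‖
      ≤ (3 : ℝ) ^ (-(supp α : ℝ) / 2) := by
  have hα' : supp α ^ 2 ≤ 3 ^ d := sq_le_pow_of_le_rpow_half (by exact_mod_cast hα)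
  have hE : (∑ p ∈ polyFinset r d, ∑ a ∈ ({1, 2} : Finset F3), chi α (shift p a)) /
      (((polyFinset r d).card : ℂ) * 2) = ((∏ x, noiseFactor (α x)).re : ℂ) := by
    rw [← expect_expect_chi_shift hα', Finset.expect_eq_sum_div_card]
    simp only [Finset.expect_eq_sum_div_card, ← Finset.sum_div, div_div, mul_comm]
    rfl
  rw [hE, ← prod_noiseFactor, Complex.norm_real, ← norm_prod_noiseFactor]
  exact ⟨rfl, Complex.abs_re_le_norm _⟩
end
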